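/- Let Z₁,…,Z_N be i.i.d. real random variables with law ν such that |Z₁| < ∞ ν-almost surely and Var[Z₁] > 0, let Λ(λ) := log E[e^{λZ₁}], and let Ŝ_N := (1/N)Σ_{n=1}^N Z_n with law μ_N. Suppose q_N ∈ ℝ and η_N > 0 are such that Λ is finite in a neighborhood of η_N and Λ'(η_N) = q_N. Define the tilted law ν̃_N by dν̃_N/dν(z) := e^{z·η_N − Λ(η_N)}, the Fenchel–Legendre transform Λ*(q_N) := sup_{λ∈ℝ}(λ·q_N − Λ(λ)), and m_{3,N} := E_{ν̃_N}[ |Z₁ − Λ'(η_N)|³ ]. Then for every positive integer N: μ_N([q_N, ∞)) ≤ e^{−N·Λ*(q_N)} · N^{−1/2} · ( m_{3,N}/Λ''(η_N)^{3/2} + 1/( η_N·√(2π·Λ''(η_N)) ) ). -/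

import Mathlib

open Real MeasureTheory ProbabilityTheory

theorem cos_le_one_sub_sq_add_cube {x : ℝ} (hx : 0 ≤ x) :
    cos x ≤ 1 - x ^ 2 / 2 + 997 / 10000 * x ^ 3 := by
  rcases le_or_gt x 2 with h | h
  · have h1 := Real.sin_ge_sub_cube (x := x / 2) (by linarith)
    have h2 : cos x = 1 - 2 * sin (x / 2) ^ 2 := by
      have := Real.cos_sq' (x / 2)
      have h3 := Real.cos_two_mul (x / 2)
      rw [mul_div_cancel₀ _ (two_ne_zero)] at h3
      rw [h3, this]; ring
    have h3 : 0 ≤ x / 2 - (x / 2) ^ 3 / 6 := by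
      nlinarith [mul_nonneg hx hx, mul_nonneg (mul_nonneg hx hx) hx,
        mul_nonneg hx (sub_nonneg.2 h)]
    have h4 : (x / 2 - (x / 2) ^ 3 / 6) ^ 2 ≤ sin (x / 2) ^ 2 := pow_le_pow_left₀ h3 h1 2
    have h5 : (x / 2 - (x / 2) ^ 3 / 6) ^ 2 ≥ x ^ 2 / 4 - x ^ 4 / 48 := by
      nlinarith [sq_nonneg (x ^ 3)]
    nlinarith [pow_nonneg hx 3, mul_nonneg (pow_nonneg hx 3) (sub_nonneg.2 h)]
  · have h1 := Real.one_sub_sq_div_two_le_cos (x := x - π)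
    rw [cos_sub_pi] at h1
    have hp1 := Real.pi_gt_d4
    have hp2 := Real.pi_lt_d4
    have key : 0 ≤ 2 - π ^ 2 / 2 + π * x - x ^ 2 + 997 / 10000 * x ^ 3 := by
      have : 2 - π ^ 2 / 2 + π * x ≥ 2 - 3.1415 ^ 2 / 2 + 3.1415 * x - 0.0001 * 3.1416 := by
        nlinarith
      nlinarith [mul_nonneg hx (sq_nonneg (x - 4.17)), sq_nonneg (x - 4.17)]
    nlinarith

/-- A bound for `|x - y| ^ 3` whose last two terms vanish in expectation for independent centred
variables `x` and `y`. -/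
theorem abs_sub_cube_le (x y : ℝ) : |x - y| ^ 3 ≤ |x| ^ 3 + |y| ^ 3 + |x| * y ^ 2 + x ^ 2 * |y|
    - 2 * (x * |x|) * y - 2 * x * (y * |y|) := by
  have h : |x - y| ≤ |x| + |y| := by simpa [sub_eq_add_neg] using abs_add_le x (-y)
  have h1 : |x - y| ^ 3 = |x - y| * (x - y) ^ 2 := by rw [pow_succ', sq_abs]
  rw [h1]
  have := mul_le_mul_of_nonneg_right h (sq_nonneg (x - y))
  refine this.trans (le_of_eq ?_)
  have e1 : |x| ^ 3 = |x| * x ^ 2 := by rw [pow_succ', sq_abs]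
  have e2 : |y| ^ 3 = |y| * y ^ 2 := by rw [pow_succ', sq_abs]
  rw [e1, e2]; ring

/-- The characteristic function of a centred law with unit variance, bounded in terms of its third
absolute moment `ρ`. -/
theorem sq_norm_charFun_le {P : Measure ℝ} [IsProbabilityMeasure P] {ρ : ℝ}
    (h3 : Integrable (fun x => |x| ^ 3) P) (hmean : ∫ x, x ∂P = 0)
    (hvar : ∫ x, x ^ 2 ∂P = 1) (hρ : ∫ x, |x| ^ 3 ∂P = ρ) {s : ℝ} (hs : 0 ≤ s) :
    ‖charFun P s‖ ^ 2 ≤ 1 - s ^ 2 + 2 * (997 / 10000) * (ρ + 1) * s ^ 3 := by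
  have hm3 : MemLp (fun x : ℝ => x) 3 P := by
    rw [← integrable_norm_rpow_iff (by fun_prop) (by norm_num) (by norm_num)]
    simpa [ENNReal.toReal_ofNat] using h3
  have i2 : Integrable (fun x : ℝ => x ^ 2) P := by
    have : MemLp (fun x : ℝ => x) 2 P := hm3.mono_exponent (by norm_num)
    exact this.integrable_sq
  have i1 : Integrable (fun x : ℝ => x) P :=
    memLp_one_iff_integrable.1 (hm3.mono_exponent (by norm_num))
  have ia : Integrable (fun x : ℝ => |x|) P := i1.abs
  have ixa : Integrable (fun x : ℝ => x * |x|) P := by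
    refine i2.mono' (by fun_prop) (.of_forall fun x => ?_)
    rw [norm_mul, Real.norm_eq_abs, Real.norm_eq_abs, abs_abs, ← sq, sq_abs]
  have hA : ∫ x, |x| ∂P ≤ 1 := by
    have : ∫ x, |x| ∂P ≤ ∫ x, (1 + x ^ 2) / 2 ∂P := by
      refine integral_mono ia (((integrable_const 1).add i2).div_const 2) fun x => ?_
      show |x| ≤ (1 + x ^ 2) / 2
      nlinarith [sq_nonneg (|x| - 1), sq_abs x]
    refine this.trans (le_of_eq ?_)
    rw [integral_div, integral_add (integrable_const 1) i2, hvar]; simp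
  have hnorm : ‖charFun P s‖ ^ 2 = ∫ z, cos (s * (z.1 - z.2)) ∂(P.prod P) := by
    have h1 : ((‖charFun P s‖ ^ 2 : ℝ) : ℂ) = charFun P s * charFun P (-s) := by
      rw [charFun_neg, Complex.mul_conj, Complex.normSq_eq_norm_sq]
    have h2 : charFun P s * charFun P (-s) =
        ∫ z, Complex.exp ((s * (z.1 - z.2) : ℝ) * Complex.I) ∂(P.prod P) := by
      rw [charFun_apply_real, charFun_apply_real, ← integral_prod_mul]
      congr 1; ext z; rw [← Complex.exp_add]; congr 1; push_cast; ring
    have h4 : Integrable (fun z : ℝ × ℝ => Complex.exp ((s * (z.1 - z.2) : ℝ) * Complex.I))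
        (P.prod P) := by
      refine (integrable_const (1:ℝ)).mono' (by fun_prop) (.of_forall fun z => ?_)
      rw [Complex.norm_exp_ofReal_mul_I]
    have h5 := congrArg Complex.re (h1.trans h2)
    rw [Complex.ofReal_re] at h5
    have h6 := integral_re h4
    rw [RCLike.re_eq_complex_re] at h6
    rw [← h6] at h5
    rw [h5]
    congr 1; ext z; rw [Complex.exp_ofReal_mul_I_re]
  have ic : Integrable (fun _ : ℝ => (1 : ℝ)) P := integrable_const 1
  have p1 := h3.mul_prod ic
  have p2 := ic.mul_prod h3
  have p3 := ia.mul_prod i2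
  have p4 := i2.mul_prod ia
  have p5 := ixa.mul_prod i1
  have p6 := i1.mul_prod ixa
  have p7 := i2.mul_prod ic
  have p8 := ic.mul_prod i2
  have p9 := i1.mul_prod i1
  have bound : ∀ z : ℝ × ℝ, cos (s * (z.1 - z.2)) ≤
      1 - s ^ 2 / 2 * (z.1 ^ 2 * 1 + 1 * z.2 ^ 2 - 2 * (z.1 * z.2)) +
      997 / 10000 * s ^ 3 * (|z.1| ^ 3 * 1 + 1 * |z.2| ^ 3 + |z.1| * z.2 ^ 2 + z.1 ^ 2 * |z.2|
        - 2 * (z.1 * |z.1| * z.2) - 2 * (z.1 * (z.2 * |z.2|))) := by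
    intro z
    have h1 := cos_le_one_sub_sq_add_cube (abs_nonneg (s * (z.1 - z.2)))
    rw [cos_abs, sq_abs, abs_mul, abs_of_nonneg hs, mul_pow] at h1
    have h2 := mul_le_mul_of_nonneg_left (abs_sub_cube_le z.1 z.2) (pow_nonneg hs 3)
    nlinarith
  have q1 := (p7.add p8).sub (p9.const_mul 2)
  have q2 := ((((p1.add p2).add p3).add p4).sub (p5.const_mul 2)).sub (p6.const_mul 2)
  have icc : Integrable (fun _ : ℝ × ℝ => (1 : ℝ)) (P.prod P) := integrable_const 1
  rw [hnorm]
  refine (integral_mono ?_ ((icc.sub (q1.const_mul (s ^ 2 / 2))).add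
    (q2.const_mul (997 / 10000 * s ^ 3))) bound).trans ?_
  · refine icc.mono' (by fun_prop) (.of_forall fun z => ?_)
    exact abs_cos_le_one _
  · have e (f g : ℝ → ℝ) := integral_prod_mul (μ := P) (ν := P) f g
    rw [integral_add' (icc.sub (q1.const_mul (s ^ 2 / 2))) (q2.const_mul (997 / 10000 * s ^ 3)),
      integral_sub' icc (q1.const_mul (s ^ 2 / 2)), integral_const_mul (s ^ 2 / 2),
      integral_const_mul (997 / 10000 * s ^ 3),
      integral_sub' (p7.add p8) (p9.const_mul 2), integral_add' p7 p8,
      integral_sub' ((((p1.add p2).add p3).add p4).sub (p5.const_mul 2)) (p6.const_mul 2),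
      integral_sub' (((p1.add p2).add p3).add p4) (p5.const_mul 2),
      integral_add' ((p1.add p2).add p3) p4, integral_add' (p1.add p2) p3, integral_add' p1 p2,
      integral_const_mul 2, integral_const_mul 2, integral_const_mul 2,
      e (fun x => |x| ^ 3) (fun _ => 1), e (fun _ => 1) (fun x => |x| ^ 3),
      e (fun x => |x|) (fun x => x ^ 2), e (fun x => x ^ 2) (fun x => |x|),
      e (fun x => x * |x|) (fun x => x), e (fun x => x) (fun x => x * |x|),
      e (fun x => x ^ 2) (fun _ => 1), e (fun _ => 1) (fun x => x ^ 2),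
      e (fun x => x) (fun x => x), hmean, hvar, hρ]
    simp only [integral_const, probReal_univ, smul_eq_mul]
    nlinarith [mul_le_mul_of_nonneg_left hA (pow_nonneg hs 3)]

theorem exp_neg_ge_cubic {z : ℝ} (h0 : 0 ≤ z) (h1 : z ≤ 8 / 5) :
    1 - z + 9 / 20 * z ^ 2 - 1 / 10 * z ^ 3 ≤ exp (-z) := by
  have h := Real.exp_bound (x := -(z / 2)) (n := 4) (by rw [abs_neg, abs_of_nonneg] <;> linarith)
    (by norm_num)
  rw [abs_neg, abs_of_nonneg (by linarith : 0 ≤ z / 2)] at h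
  have h2 := (abs_le.1 h).1
  simp only [Finset.sum_range_succ, Finset.sum_range_zero, Nat.factorial] at h2
  norm_num at h2
  obtain ⟨t, rfl⟩ : ∃ t, z = 2 * t := ⟨z / 2, by ring⟩
  have h3 : 1 - t + t ^ 2 / 2 - t ^ 3 / 6 - 5 / 96 * t ^ 4 ≤ exp (-t) := by
    rw [mul_div_cancel_left₀ _ two_ne_zero] at h2
    nlinarith
  have ht0 : 0 ≤ t := by linarith
  have ht1 : 0 ≤ 4 / 5 - t := by linarith
  have h4 : 0 ≤ 1 - t + t ^ 2 / 2 - t ^ 3 / 6 - 5 / 96 * t ^ 4 := by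
    have h5 : t ^ 2 * t ≤ t ^ 2 * (4 / 5) := by gcongr; linarith
    have h6 : t ^ 2 * t ^ 2 ≤ t ^ 2 * (4 / 5) ^ 2 := by gcongr; linarith
    nlinarith
  have h5 : exp (-(2 * t)) = exp (-t) ^ 2 := by
    rw [← exp_nat_mul]; congr 1; push_cast; ring
  rw [h5]
  refine le_trans ?_ (pow_le_pow_left₀ h4 h3 2)
  have e : (1 - t + t ^ 2 / 2 - t ^ 3 / 6 - 5 / 96 * t ^ 4) ^ 2
     - (1 - 2 * t + 9 / 20 * (2 * t) ^ 2 - 1 / 10 * (2 * t) ^ 3) =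
     t ^ 2 * (1 / 5 - 8 / 15 * t + 23 / 48 * t ^ 2 - t ^ 3 / 16 - 7 / 288 * t ^ 4 + 5 / 288 * t ^ 5
       + 25 / 9216 * t ^ 6) := by ring
  have : 0 ≤ 1 / 5 - 8 / 15 * t + 23 / 48 * t ^ 2 - t ^ 3 / 16 - 7 / 288 * t ^ 4 + 5 / 288 * t ^ 5
       + 25 / 9216 * t ^ 6 := by
    have a1 : t ^ 2 * t ≤ t ^ 2 * (4 / 5) := by gcongr; linarith
    have a2 : t ^ 2 * t ^ 2 ≤ t ^ 2 * (4 / 5) ^ 2 := by gcongr; linarith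
    nlinarith [pow_nonneg ht0 5, pow_nonneg ht0 6, sq_nonneg (t - 2 / 3)]
  nlinarith [mul_nonneg (sq_nonneg t) this]

theorem smoothing_poly_bounds {x : ℝ} (h0 : 0 ≤ x) (h1 : x ≤ 13 / 20) :
    (1 - x / 2 + x ^ 3 * (1 - x / 4) ^ 2 / 2) ^ 2 ≤ (1 - x + x ^ 2 / 4 + x ^ 3 * (1 - 3 / 4 * x)) ∧
    x ^ 2 * (1 - x + x ^ 2 / 4 + x ^ 3 * (1 - 3 / 4 * x)) ≤ 254 / 1000 ∧
    63 / 100 * x ^ 2 ≤ (1 - x ^ 2 * (1 - x / 4)) ^ 3 ∧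
    0 ≤ 1 - x - (1 - x + x ^ 2 / 4 + x ^ 3 * (1 - 3 / 4 * x))
      + 2895 / 10000 * (628 / 100) * x ^ 2 * (1 - x + x ^ 2 / 4 + x ^ 3 * (1 - 3 / 4 * x)) ^ 2 ∧
    0 ≤ 1 - 3 / 4 * x - (1 - x + x ^ 2 / 4 + x ^ 3 * (1 - 3 / 4 * x))
      + 102 / 1000 * (628 / 100) * x ^ 2 * (1 - x + x ^ 2 / 4 + x ^ 3 * (1 - 3 / 4 * x)) ^ 2 ∧
    0 ≤ (1 - x / 4) * (1 - x ^ 2 * (1 - x / 4)) ^ 2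
      - (1 - x + x ^ 2 / 4 + x ^ 3 * (1 - 3 / 4 * x))
      + 2895 / 10000 * (628 / 100) * x ^ 2 * (1 - x + x ^ 2 / 4 + x ^ 3 * (1 - 3 / 4 * x)) ^ 2 ∧
    0 ≤ (1 - x / 4) * (1 - x ^ 2 * (1 - x / 4)) ^ 2 + 1575 / 10000
      - (1 - x + x ^ 2 / 4 + x ^ 3 * (1 - 3 / 4 * x))
      + 102 / 1000 * (628 / 100) * x ^ 2 * (1 - x + x ^ 2 / 4 + x ^ 3 * (1 - 3 / 4 * x)) ^ 2 := by
  have h (i j : ℕ) : 0 ≤ x ^ i * (13 / 20 - x) ^ j :=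
    mul_nonneg (pow_nonneg h0 i) (pow_nonneg (sub_nonneg.2 h1) j)
  refine ⟨?_, ?_, ?_, ?_, ?_, ?_, ?_⟩
  · linarith [h 4 6, h 5 5, h 6 4, h 7 3, h 8 2, h 9 1, h 10 0]
  · linarith [h 0 6, h 1 5, h 2 4, h 3 3, h 4 2, h 5 1, h 6 0]
  · linarith [h 0 9, h 1 8, h 2 7, h 3 6, h 4 5, h 5 4, h 6 3, h 7 2, h 8 1, h 9 0]
  · linarith [h 2 8, h 3 7, h 4 6, h 5 5, h 6 4, h 7 3, h 8 2, h 9 1, h 10 0]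
  · linarith [h 1 9, h 2 8, h 3 7, h 4 6, h 5 5, h 6 4, h 7 3, h 8 2, h 9 1, h 10 0]
  · linarith [h 1 9, h 2 8, h 3 7, h 4 6, h 5 5, h 6 4, h 7 3, h 8 2, h 9 1, h 10 0]
  · linarith [h 0 10, h 1 9, h 2 8, h 3 7, h 4 6, h 5 5, h 6 4, h 7 3, h 8 2, h 9 1, h 10 0]

theorem smoothing_exp_bounds {x r : ℝ} (h0 : 0 ≤ x) (h1 : x ≤ 13 / 20) (hr : 1 / 2 ≤ r)
    (hr1 : r ≤ 1) {z u : ℝ}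
    (hz : z = 2 * π * r ^ 2 * x ^ 2 * (1 - x / 2 + x ^ 3 * (1 - x / 4) ^ 2 / 2) ^ 2)
    (hu : u = 1 - x ^ 2 * (1 - x / 4)) :
    1 - 2 * π * r ^ 2 * x ^ 2 * (1 - (1 + r) * x / 2) ≤ exp (-z) ∧
    1 - 2 * π * r ^ 2 * u ^ 2 * (1 - (1 + r) * u / 2) ≤ exp (-z) := by
  obtain ⟨b1, b2, b3, b4, b5, b6, b7⟩ := smoothing_poly_bounds h0 h1
  rw [← hu] at b3 b6 b7
  set U := 1 - x + x ^ 2 / 4 + x ^ 3 * (1 - 3 / 4 * x) with hU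
  set T := (1 - x / 2 + x ^ 3 * (1 - x / 4) ^ 2 / 2) ^ 2 with hT
  have hT0 : 0 ≤ T := sq_nonneg _
  clear_value U T
  have hp1 : (628 / 100 : ℝ) ≤ 2 * π := by linarith [Real.pi_gt_d2]
  have hp2 : 2 * π ≤ 63 / 10 := by linarith [Real.pi_lt_d2]
  have hxT : x ^ 2 * T ≤ x ^ 2 * U := by gcongr
  have hxT0 : 0 ≤ x ^ 2 * T := by positivity
  have hz0 : 0 ≤ z := by rw [hz]; positivity
  have hr2 : r ^ 2 ≤ 1 := pow_le_one₀ (by linarith) hr1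
  have hr20 : 0 ≤ r ^ 2 := sq_nonneg r
  have hzr : z ≤ 8 / 5 * r ^ 2 := by
    have : z = r ^ 2 * (2 * π * (x ^ 2 * T)) := by rw [hz]; ring
    have h2 : 2 * π * (x ^ 2 * T) ≤ 8 / 5 := by
      have h2p : 2 * π < 2 * 3.1416 := by linarith [Real.pi_lt_d4]
      calc 2 * π * (x ^ 2 * T) ≤ 2 * 3.1416 * (254 / 1000) :=
            mul_le_mul h2p.le (hxT.trans b2) hxT0 (by norm_num)
        _ ≤ 8 / 5 := by norm_num
    rw [this, mul_comm (8 / 5)]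
    exact mul_le_mul_of_nonneg_left h2 hr20
  have hz1 : z ≤ 8 / 5 := by linarith
  -- the linear minorant of the quadratic coefficient
  have hg : 375 / 1000 * r - 855 / 10000 ≤ (9 / 20 - 4 / 25 * r ^ 2) * r ^ 2 := by
    have e : (9 / 20 - 4 / 25 * r ^ 2) * r ^ 2 - (375 / 1000 * r - 855 / 10000) =
        1 / 2000 + (1 - r) * (2 / 5 * (r - 1 / 2) ^ 2 - 1 / 100 * (r - 1 / 2)) +
          4 / 25 * (r - 1 / 2) ^ 3 * (1 - r) := by ring
    have e1 : -(1 / 2000) ≤ 2 / 5 * (r - 1 / 2) ^ 2 - 1 / 100 * (r - 1 / 2) := by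
      nlinarith [sq_nonneg (r - 1 / 2 - 1 / 80)]
    have e2 : 0 ≤ 4 / 25 * (r - 1 / 2) ^ 3 * (1 - r) :=
      mul_nonneg (mul_nonneg (by norm_num) (pow_nonneg (by linarith) 3)) (by linarith)
    have e3 := mul_le_mul_of_nonneg_left e1 (by linarith : 0 ≤ 1 - r)
    linarith
  have hg0 : 0 ≤ 375 / 1000 * r - 855 / 10000 := by linarith
  have hg1 : 375 / 1000 * r - 855 / 10000 ≤ 29 / 100 := by linarith
  generalize hgg : 375 / 1000 * r - 855 / 10000 = g at *
  -- it suffices to compare with `U`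
  have main : ∀ c, U - g * (628 / 100) * x ^ 2 * U ^ 2 ≤ c →
      1 - 2 * π * r ^ 2 * x ^ 2 * c ≤ exp (-z) := by
    intro c hc
    refine le_trans ?_ (exp_neg_ge_cubic hz0 hz1)
    have m1 : T - g * (628 / 100) * x ^ 2 * T ^ 2 ≤ U - g * (628 / 100) * x ^ 2 * U ^ 2 := by
      have : g * (628 / 100) * (x ^ 2 * U + x ^ 2 * T) ≤ 1 := by
        have : x ^ 2 * U + x ^ 2 * T ≤ 508 / 1000 := by linarith
        have h2 : 0 ≤ x ^ 2 * U + x ^ 2 * T := by linarith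
        calc g * (628 / 100) * (x ^ 2 * U + x ^ 2 * T) ≤
            29 / 100 * (628 / 100) * (508 / 1000) := by gcongr
          _ ≤ 1 := by norm_num
      linarith [mul_nonneg (sub_nonneg.2 b1) (sub_nonneg.2 this)]
    have m2 : g * (628 / 100) * x ^ 2 * T ≤ (9 / 20 - 4 / 25 * r ^ 2) * z := by
      have : (9 / 20 - 4 / 25 * r ^ 2) * z =
          (9 / 20 - 4 / 25 * r ^ 2) * r ^ 2 * (2 * π) * (x ^ 2 * T) := by
        rw [hz]; ring
      rw [this, mul_assoc _ (x ^ 2)]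
      gcongr
      linarith
    have m3 : z * (1 - (9 / 20 - 4 / 25 * r ^ 2) * z) ≤ 2 * π * r ^ 2 * x ^ 2 * c := by
      have : z * (1 - (9 / 20 - 4 / 25 * r ^ 2) * z) =
          2 * π * r ^ 2 * x ^ 2 * (T * (1 - (9 / 20 - 4 / 25 * r ^ 2) * z)) := by rw [hz]; ring
      rw [this]
      gcongr
      linarith [mul_le_mul_of_nonneg_left m2 hT0]
    linarith [mul_nonneg (mul_nonneg hz0 hz0) (sub_nonneg.2 hzr)]
  constructor
  · exact main _ (by
      rw [← hgg]
      linarith [mul_nonneg (sub_nonneg.2 hr1) b5, mul_nonneg (sub_nonneg.2 hr) b4])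
  · rcases h0.eq_or_lt with h00 | h00
    · have hu1 : u = 1 := by rw [hu, ← h00]; norm_num
      have hz00 : z = 0 := by rw [hz, ← h00]; norm_num
      rw [hz00, neg_zero, exp_zero, hu1]
      have : 0 ≤ 2 * π * r ^ 2 * 1 ^ 2 * (1 - (1 + r) * 1 / 2) :=
        mul_nonneg (by positivity) (by linarith)
      linarith
    · have hx2 : 0 < x ^ 2 := by positivity
      have := main ((1 - x / 4) * u ^ 2 + (1 - r) / 2 * (u ^ 3 / x ^ 2)) (by
        have : 63 / 100 ≤ u ^ 3 / x ^ 2 := by rw [le_div_iff₀ hx2]; exact b3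
        have := mul_le_mul_of_nonneg_left this (by linarith : 0 ≤ (1 - r) / 2)
        rw [← hgg]
        linarith [mul_nonneg (sub_nonneg.2 hr1) b7, mul_nonneg (sub_nonneg.2 hr) b6])
      refine le_trans (le_of_eq ?_) this
      have e : x ^ 2 * ((1 - x / 4) * u ^ 2 + (1 - r) / 2 * (u ^ 3 / x ^ 2)) =
          u ^ 2 * (1 - (1 + r) * u / 2) := by
        have : x ^ 2 * (u ^ 3 / x ^ 2) = u ^ 3 := by field_simp
        have e2 : x ^ 2 * (1 - x / 4) = 1 - u := by rw [hu]; ring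
        linear_combination (1 - r) / 2 * this + u ^ 2 * e2
      linear_combination (2 * π * r ^ 2) * e

theorem integral_deriv_mul_exp_neg_sq_le {W W' : ℝ → ℝ} (hW : ∀ x, HasDerivAt W (W' x) x)
    (hW' : Continuous W') {b k : ℝ} (h0 : W 0 = 0) (hb : 0 ≤ W b) (hk : 0 < k) :
    ∫ x in (0 : ℝ)..b, W' x * exp (-k * W x ^ 2) ≤ √(π / k) / 2 := by
  have h := intervalIntegral.integral_comp_mul_deriv (a := 0) (b := b) (f := W) (f' := W')
    (g := fun v => exp (-k * v ^ 2)) (fun x _ => hW x) hW'.continuousOn (by fun_prop)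
  simp only [Function.comp_def] at h
  simp_rw [mul_comm (W' _)]
  rw [h, h0, ← integral_gaussian_Ioi, intervalIntegral.integral_of_le hb]
  exact setIntegral_mono_set (integrable_exp_neg_mul_sq hk).integrableOn
    (.of_forall fun _ => (exp_pos _).le) (.of_forall fun x hx => hx.1)

theorem pow_le_exp_of_sq_le {F z : ℝ} (hF : 0 ≤ F) (h : F ^ 2 ≤ exp (-z)) (N : ℕ) :
    F ^ N ≤ exp (-(N * z / 2)) := by
  have h1 : F ≤ exp (-z / 2) := by
    refine le_of_sq_le_sq ?_ (exp_pos _).le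
    rwa [← exp_nat_mul, show ((2 : ℕ) : ℝ) * (-z / 2) = -z by push_cast; ring]
  calc F ^ N ≤ exp (-z / 2) ^ N := pow_le_pow_left₀ hF h1 N
    _ = _ := by rw [← exp_nat_mul]; congr 1; ring

set_option maxHeartbeats 800000 in
theorem integral_one_sub_mul_pow_le {F : ℝ → ℝ} (hFc : Continuous F) (hF0 : ∀ s, 0 ≤ F s) {ρ : ℝ}
    (hρ : 1 ≤ ρ) (hF : ∀ s, 0 ≤ s → F s ^ 2 ≤ 1 - s ^ 2 + 2 * (997 / 10000) * (ρ + 1) * s ^ 3)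
    {N : ℕ} (hN : 0 < N) :
    ∫ u in (0 : ℝ)..1, (1 - u) * F (√(2 * π) / ρ * u) ^ N ≤ ρ / √(2 * π) * √(π / (2 * N)) := by
  have hρ0 : 0 < ρ := by linarith
  set r := ρ⁻¹ with hr
  have hr0 : 0 < r := inv_pos.2 hρ0
  have hr1 : r ≤ 1 := inv_le_one_of_one_le₀ hρ
  have hρr : ρ * r = 1 := mul_inv_cancel₀ hρ0.ne'
  set S := √(2 * π) / ρ with hS
  have hq0 : 0 < √(2 * π) := sqrt_pos.2 (by positivity)
  have hq2 : √(2 * π) ^ 2 = 2 * π := sq_sqrt (by positivity)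
  have hS' : S = √(2 * π) * r := div_eq_mul_inv _ _
  have hS0 : 0 < S := by positivity
  have hS2 : S ^ 2 = 2 * π * r ^ 2 := by rw [hS', mul_pow, hq2]
  have hN0 : (0 : ℝ) < N := by exact_mod_cast hN
  have hk : 0 < N * S ^ 2 / 2 := by positivity
  have hbound : ρ / √(2 * π) * √(π / (2 * N)) = √(π / (N * S ^ 2 / 2)) / 2 := by
    have : π / (N * S ^ 2 / 2) = (2 * (ρ / √(2 * π))) ^ 2 * (π / (2 * N)) := by
      rw [hS]; field_simp
    rw [this, sqrt_mul' ((2 * (ρ / √(2 * π))) ^ 2) (by positivity), sqrt_sq (by positivity)]; ring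
  rw [hbound]
  have hFS (u : ℝ) (hu : 0 ≤ u) :
      F (S * u) ^ 2 ≤ 1 - 2 * π * r ^ 2 * u ^ 2 * (1 - (1 + r) * u / 2) := by
    refine (hF _ (by positivity)).trans ?_
    have hq : √(2 * π) ≤ 2.5067 := by
      rw [sqrt_le_left (by norm_num)]; linarith [pi_lt_d4]
    have e1 : (S * u) ^ 2 = 2 * π * r ^ 2 * u ^ 2 := by rw [mul_pow, hS2]
    have e2 : (ρ + 1) * (S * u) ^ 3 = √(2 * π) * (2 * π * r ^ 2 * u ^ 3 * (1 + r)) := by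
      rw [hS', show (√(2 * π) * r * u) ^ 3 = √(2 * π) * √(2 * π) ^ 2 * r ^ 3 * u ^ 3 by ring, hq2]
      linear_combination (√(2 * π) * 2 * π * r ^ 2 * u ^ 3) * hρr
    have e3 : 0 ≤ 2 * π * r ^ 2 * u ^ 3 * (1 + r) := by positivity
    rw [mul_assoc, e1, e2]
    nlinarith [mul_le_mul_of_nonneg_right hq e3]
  have hGc : Continuous fun u => (1 - u) * F (S * u) ^ N := by fun_prop
  rcases le_or_gt r (1 / 2) with hr2 | hr2
  · refine le_trans ?_ (integral_deriv_mul_exp_neg_sq_le (W := fun x => x - x ^ 2 / 2)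
      (W' := fun x => 1 - x) (b := 1) (fun x => ?_) (by fun_prop) (by norm_num) (by norm_num) hk)
    · refine intervalIntegral.integral_mono_on zero_le_one (hGc.intervalIntegrable _ _)
        (Continuous.intervalIntegrable (by fun_prop) _ _) fun u hu => ?_
      refine mul_le_mul_of_nonneg_left ?_ (sub_nonneg.2 hu.2)
      refine (pow_le_exp_of_sq_le (hF0 _) (z := S ^ 2 * (u - u ^ 2 / 2) ^ 2) ?_ N).trans
        (le_of_eq ?_)
      · refine (hFS u hu.1).trans (le_trans ?_ (one_sub_le_exp_neg _))
        have : (u - u ^ 2 / 2) ^ 2 ≤ u ^ 2 * (1 - (1 + r) * u / 2) := by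
          have : (1 - u / 2) ^ 2 ≤ 1 - (1 + r) * u / 2 := by nlinarith [hu.1, hu.2]
          nlinarith [mul_le_mul_of_nonneg_left this (sq_nonneg u)]
        have h0 : 0 ≤ 2 * π * r ^ 2 := by positivity
        rw [hS2]
        nlinarith [mul_le_mul_of_nonneg_left this h0]
      · congr 1; ring
    · exact ((hasDerivAt_id' x).fun_sub ((hasDerivAt_pow 2 x).div_const 2)).congr_deriv
        (by norm_num)
  · have hc : Continuous fun x : ℝ => 1 - x ^ 2 * (1 - x / 4) := by fun_prop
    have hd (x : ℝ) : HasDerivAt (fun x : ℝ => x ^ 2 * (1 - x / 4)) (2 * x - 3 / 4 * x ^ 2) x := by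
      exact ((hasDerivAt_pow 2 x).fun_mul
        (((hasDerivAt_id' x).div_const 4).const_sub 1)).congr_deriv
        (by norm_num; ring)
    have hsub := intervalIntegral.integral_comp_mul_deriv (a := 0) (b := 13 / 20)
      (f := fun x : ℝ => 1 - x ^ 2 * (1 - x / 4)) (f' := fun x => -(2 * x - 3 / 4 * x ^ 2))
      (g := fun u => (1 - u) * F (S * u) ^ N) (fun x _ => (hd x).const_sub 1) (by fun_prop)
      hGc
    have hsplit : ∫ u in (0 : ℝ)..1, (1 - u) * F (S * u) ^ N ≤
        (∫ u in (0 : ℝ)..(13 / 20), (1 - u) * F (S * u) ^ N) +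
        ∫ u in (1 - (13 / 20) ^ 2 * (1 - 13 / 20 / 4) : ℝ)..1, (1 - u) * F (S * u) ^ N := by
      rw [← intervalIntegral.integral_add_adjacent_intervals
        (hGc.intervalIntegrable 0 (13 / 20)) (hGc.intervalIntegrable (13 / 20) 1)]
      refine add_le_add_right ?_ _
      refine intervalIntegral.integral_mono_interval (by norm_num) (by norm_num) le_rfl ?_
        (hGc.intervalIntegrable _ _)
      refine (ae_restrict_iff' measurableSet_Ioc).2 (.of_forall fun u hu => ?_)
      exact mul_nonneg (sub_nonneg.2 hu.2) (pow_nonneg (hF0 _) _)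
    refine hsplit.trans ?_
    have hsub' : ∫ u in (1 - (13 / 20) ^ 2 * (1 - 13 / 20 / 4) : ℝ)..1, (1 - u) * F (S * u) ^ N =
        ∫ x in (0 : ℝ)..(13 / 20), x ^ 2 * (1 - x / 4) * (2 * x - 3 / 4 * x ^ 2) *
          F (S * (1 - x ^ 2 * (1 - x / 4))) ^ N := by
      rw [intervalIntegral.integral_symm, eq_comm, ← neg_eq_iff_eq_neg,
        ← intervalIntegral.integral_neg]
      convert hsub using 1
      · congr 1; ext x; simp only [Function.comp_def]; ring
      · norm_num
    rw [hsub', ← intervalIntegral.integral_add (hGc.intervalIntegrable _ _)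
      (Continuous.intervalIntegrable (by fun_prop) _ _)]
    have hdW (x : ℝ) : HasDerivAt (fun x : ℝ => x - x ^ 2 / 2 + (x ^ 2 * (1 - x / 4)) ^ 2 / 2)
        (1 - x + x ^ 2 * (1 - x / 4) * (2 * x - 3 / 4 * x ^ 2)) x :=
      (((hasDerivAt_id' x).fun_sub ((hasDerivAt_pow 2 x).div_const 2)).fun_add
        (((hd x).fun_pow 2).div_const 2)).congr_deriv (by norm_num; ring)
    have hW := integral_deriv_mul_exp_neg_sq_le hdW (by fun_prop) (b := 13 / 20) (by norm_num)
      (by norm_num) hk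
    refine le_trans ?_ hW
    refine intervalIntegral.integral_mono_on (by norm_num)
      (Continuous.intervalIntegrable (by fun_prop) _ _)
      (Continuous.intervalIntegrable (by fun_prop) _ _) fun x hx => ?_
    obtain ⟨b1, b2⟩ := smoothing_exp_bounds hx.1 hx.2 hr2.le hr1 rfl rfl
    have hu0 : 0 ≤ 1 - x ^ 2 * (1 - x / 4) := by nlinarith [hx.1, hx.2, pow_nonneg hx.1 3]
    have c1 := pow_le_exp_of_sq_le (hF0 _) ((hFS x hx.1).trans b1) N
    have c2 := pow_le_exp_of_sq_le (hF0 _) ((hFS _ hu0).trans b2) N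
    have e : -(N * (2 * π * r ^ 2 * x ^ 2 * (1 - x / 2 + x ^ 3 * (1 - x / 4) ^ 2 / 2) ^ 2) / 2) =
        -(N * S ^ 2 / 2) * (x - x ^ 2 / 2 + (x ^ 2 * (1 - x / 4)) ^ 2 / 2) ^ 2 := by
      rw [hS2]; ring
    rw [e] at c1 c2
    have h2 : 0 ≤ 1 - x := by linarith [hx.2]
    have h3 : 0 ≤ 1 - x / 4 := by linarith [hx.2]
    have h4 : 0 ≤ 2 * x - 3 / 4 * x ^ 2 := by nlinarith [hx.1, hx.2]
    have h5 : 0 ≤ x ^ 2 * (1 - x / 4) * (2 * x - 3 / 4 * x ^ 2) := by positivity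
    have d1 := mul_le_mul_of_nonneg_left c1 h2
    have d2 := mul_le_mul_of_nonneg_left c2 h5
    exact (add_le_add d1 d2).trans (le_of_eq (add_mul _ _ _).symm)

/-- The partial fraction expansion of `1 / sin ^ 2`. -/
theorem hasSum_sq_sin_div {x : ℝ} (hx : ∀ n : ℤ, x ≠ n) :
    HasSum (fun n : ℤ => (sin (π * x) / π) ^ 2 * (1 / (x - n) ^ 2)) 1 := by
  set f : ℝ → ℂ := fun t => Complex.exp (Complex.I * (2 * π * x * t : ℝ)) with hf
  have hfn (t : ℝ) : ‖f t‖ = 1 := by rw [hf]; exact Complex.norm_exp_I_mul_ofReal _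
  have hfc : Continuous f := by fun_prop
  have hL2 : MemLp f 2 (volume.restrict (Set.Ioc 0 1)) :=
    MemLp.of_bound hfc.aestronglyMeasurable 1 (.of_forall fun t => (hfn t).le)
  have h := hasSum_sq_fourierCoeffOn zero_lt_one hL2
  have h1 : ((1 - 0 : ℝ)⁻¹ • ∫ t in (0 : ℝ)..1, ‖f t‖ ^ 2) = 1 := by simp [hfn]
  rw [h1] at h
  convert h using 2 with n
  have hxn : x - n ≠ 0 := sub_ne_zero.2 (hx n)
  have hc : (Complex.I * (2 * π * (x - n) : ℝ)) ≠ 0 := by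
    simp only [ne_eq, mul_eq_zero, Complex.I_ne_zero, Complex.ofReal_eq_zero, false_or]
    have := pi_ne_zero
    simp [hxn]
  have h2 : fourierCoeffOn zero_lt_one f n =
      (Complex.exp (Complex.I * (2 * π * (x - n) : ℝ)) - 1) /
        (Complex.I * (2 * π * (x - n) : ℝ)) := by
    rw [fourierCoeffOn_eq_integral]
    have h3 := integral_exp_mul_complex (a := 0) (b := 1) hc
    simp only [Complex.ofReal_one, mul_one, Complex.ofReal_zero, mul_zero, Complex.exp_zero] at h3
    rw [← h3]
    simp only [sub_zero, div_one, one_smul]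
    refine intervalIntegral.integral_congr fun t _ => ?_
    simp only [fourier_coe_apply, hf, smul_eq_mul]
    rw [← Complex.exp_add]
    congr 1
    push_cast
    ring
  have h4 : sin (2 * π * (x - n) / 2) ^ 2 = sin (π * x) ^ 2 := by
    rw [show 2 * π * (x - n) / 2 = π * x - n * π by ring, sin_sub_int_mul_pi, mul_pow,
      ← zpow_natCast, ← zpow_mul, mul_comm n, zpow_mul]
    norm_num
  rw [h2, norm_div, Complex.norm_exp_I_mul_ofReal_sub_one, norm_mul Complex.I, Complex.norm_I,
    one_mul, Complex.norm_real, ← norm_div, norm_eq_abs, sq_abs, div_pow, div_pow, mul_pow, h4]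
  field_simp

theorem smoothing_partial_sum {l b x : ℝ} (hx : ∀ n : ℤ, x ≠ n)
    (hb : b = (b - l) * exp l) (M : ℕ) :
    ∑ n ∈ Finset.range M, exp (l * (x - n)) *
      (1 / (x - n) ^ 2 - (b - l) / ((x - n) * (x - n - 1))) =
    ∑ n ∈ Finset.range M, exp (l * (x - n)) * (1 - l * (x - n)) / (x - n) ^ 2 + b * exp (l * x) / x
      - b * exp (l * (x - M)) / (x - M) := by
  induction M with
  | zero => simp
  | succ M ih =>
    rw [Finset.sum_range_succ, Finset.sum_range_succ, ih]
    have h1 : x - M ≠ 0 := sub_ne_zero.2 (by exact_mod_cast hx M)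
    have h2 : x - M - 1 ≠ 0 := by
      have := sub_ne_zero.2 (hx (M + 1)); push_cast at this; rwa [sub_sub]
    have h3 : b * exp (l * (x - (M + 1 : ℕ))) = (b - l) * exp (l * (x - M)) := by
      conv_lhs => rw [hb]
      rw [mul_assoc, ← exp_add]; congr 2; push_cast; ring
    rw [h3]
    push_cast
    rw [← sub_sub x]
    field_simp
    ring

theorem smoothing_sum_ge {l b x : ℝ} (hl : 0 < l) (hb : b * (1 - exp (-l)) = l)
    (hx : 0 < x) (hx' : ∀ n : ℤ, x ≠ n) (M : ℕ) :
    ∑ n ∈ Finset.range M, 1 / (x - n) ^ 2 + 1 / x ≤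
      ∑ n ∈ Finset.range M, exp (l * (x - n)) * (1 - l * (x - n)) / (x - n) ^ 2
        + b * exp (l * x) / x := by
  have he : 0 < 1 - exp (-l) := by
    have : exp (-l) < 1 := by rw [exp_lt_one_iff]; linarith
    linarith
  have hb1 : 1 ≤ b := by
    have : 1 - exp (-l) ≤ l := by linarith [add_one_le_exp (-l)]
    have h2 : 1 * (1 - exp (-l)) ≤ b * (1 - exp (-l)) := by linarith
    exact le_of_mul_le_mul_right h2 he
  set f : ℝ → ℝ := fun u =>
    ∑ n ∈ Finset.range M, exp (u * (x - n)) * (1 - u * (x - n)) / (x - n) ^ 2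
      + b * exp (u * x) / x with hf
  have hne (n : ℕ) : x - n ≠ 0 := sub_ne_zero.2 (by exact_mod_cast hx' n)
  have hd (u : ℝ) : HasDerivAt f (∑ n ∈ Finset.range M, -(u * exp (u * (x - n))) + b * exp (u * x))
      u := by
    refine HasDerivAt.fun_add (HasDerivAt.fun_sum fun n _ => ?_) ?_
    · have h1 : HasDerivAt (fun u => u * (x - n)) (x - n) u := by
        simpa using (hasDerivAt_id' u).mul_const (x - n)
      refine ((h1.exp.fun_mul (h1.const_sub 1)).div_const _).congr_deriv ?_
      have := hne n
      field_simp
      ring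
    · have h1 : HasDerivAt (fun u => u * x) x u := by
        simpa using (hasDerivAt_id' u).mul_const x
      refine ((h1.exp.const_mul b).div_const x).congr_deriv ?_
      field_simp
  have hmono : MonotoneOn f (Set.Icc 0 l) := by
    refine monotoneOn_of_hasDerivWithinAt_nonneg (convex_Icc 0 l)
      (fun u _ => (hd u).continuousAt.continuousWithinAt) (fun u _ => (hd u).hasDerivWithinAt) ?_
    intro u hu
    rw [interior_Icc] at hu
    obtain ⟨hu0, hul⟩ := hu
    have hr : exp (-u) < 1 := by rw [exp_lt_one_iff]; linarith
    have hsum : ∑ n ∈ Finset.range M, -(u * exp (u * (x - n))) =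
        -(u * exp (u * x) * ∑ n ∈ Finset.range M, exp (-u) ^ n) := by
      rw [Finset.sum_neg_distrib, Finset.mul_sum]
      congr 1
      refine Finset.sum_congr rfl fun n _ => ?_
      rw [← exp_nat_mul, mul_assoc, ← exp_add]; congr 2; ring
    have hgeo : (∑ n ∈ Finset.range M, exp (-u) ^ n) * (1 - exp (-u)) ≤ 1 := by
      rw [geom_sum_mul_neg]
      linarith [pow_nonneg (exp_pos (-u)).le M]
    have hub : u ≤ b * (1 - exp (-u)) := by
      have hconv := convexOn_exp.2 (Set.mem_univ (-l)) (Set.mem_univ 0)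
        (by positivity : 0 ≤ u / l)
        (by rw [sub_nonneg, div_le_one hl]; exact hul.le : 0 ≤ 1 - u / l) (by ring)
      simp only [smul_eq_mul, mul_zero, add_zero, exp_zero, mul_one] at hconv
      rw [show u / l * -l = -u by field_simp] at hconv
      have h5 : u / l * (1 - exp (-l)) ≤ 1 - exp (-u) := by linarith
      have h6 := mul_le_mul_of_nonneg_left h5 (by linarith : 0 ≤ b)
      have h7 : b * (u / l * (1 - exp (-l))) = u := by
        rw [show b * (u / l * (1 - exp (-l))) = b * (1 - exp (-l)) * u / l by ring, hb]; field_simp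
      linarith
    rw [hsum]
    have hG : 0 ≤ ∑ n ∈ Finset.range M, exp (-u) ^ n := Finset.sum_nonneg fun n _ => by positivity
    have h8 : u * ∑ n ∈ Finset.range M, exp (-u) ^ n ≤ b := by
      have h9 := mul_le_mul_of_nonneg_right hub hG
      nlinarith
    have := mul_le_mul_of_nonneg_left h8 (exp_pos (u * x)).le
    linarith
  have h := hmono (Set.left_mem_Icc.2 hl.le) (Set.right_mem_Icc.2 hl.le) hl.le
  refine le_trans ?_ h
  simp only [hf, zero_mul, exp_zero, sub_zero, mul_one]
  have : 1 / x ≤ b / x := by gcongr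
  linarith

theorem sum_inv_sq_le {x : ℝ} (hx : 0 < x) (M : ℕ) :
    ∑ n ∈ Finset.range M, 1 / (x + (n + 1)) ^ 2 ≤ 1 / x := by
  have : ∑ n ∈ Finset.range M, 1 / (x + (n + 1)) ^ 2 ≤ 1 / x - 1 / (x + M) := by
    induction M with
    | zero => simp
    | succ M ih =>
      rw [Finset.sum_range_succ]
      have h1 : 0 < x + M := by positivity
      have : 1 / (x + (M + 1)) ^ 2 ≤ 1 / (x + M) - 1 / (x + (M + 1)) := by
        rw [div_sub_div _ _ (by positivity) (by positivity),
          div_le_div_iff₀ (by positivity) (by positivity)]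
        nlinarith
      push_cast
      linarith
  have h2 : 0 ≤ 1 / (x + M) := by positivity
  linarith

/-- The inhomogeneity in the functional equation `g x = exp (-l) * g (x - 1) + k x` satisfied by
the majorant `g` of the truncated exponential. -/
noncomputable def smoothingKernel (m x : ℝ) : ℝ :=
  sinc (π * x) ^ 2 + m * (sin (π * x) ^ 2 / (π ^ 2 * x) - sin (π * x) ^ 2 / (π ^ 2 * (x - 1)))

theorem smoothingKernel_eq {m x : ℝ} (h0 : x ≠ 0) (h1 : x ≠ 1) :
    smoothingKernel m x = (sin (π * x) / π) ^ 2 * (1 / x ^ 2 - m / (x * (x - 1))) := by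
  have h1' : x - 1 ≠ 0 := sub_ne_zero.2 h1
  have hp := pi_ne_zero
  rw [smoothingKernel, sinc_of_ne_zero (mul_ne_zero hp h0)]
  field_simp
  ring

section

variable {l b : ℝ} {g : ℝ → ℝ}

theorem smoothing_iterate (hg : ∀ x, g x = exp (-l) * g (x - 1) + smoothingKernel (b - l) x)
    (x : ℝ) (M : ℕ) : g x = ∑ n ∈ Finset.range M, exp (-l * n) * smoothingKernel (b - l) (x - n) +
      exp (-l * M) * g (x - M) := by
  induction M with
  | zero => simp
  | succ M ih =>
    rw [ih, Finset.sum_range_succ, hg (x - M)]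
    have : exp (-l * (M + 1 : ℕ)) = exp (-l * M) * exp (-l) := by
      rw [← exp_add]; congr 1; push_cast; ring
    rw [this, Nat.cast_succ, ← sub_sub]
    ring

theorem smoothing_nonneg (hl : 0 < l)
    (hg : ∀ x, g x = exp (-l) * g (x - 1) + smoothingKernel (b - l) x)
    (hm1 : b - l ≤ 1) {C : ℝ} (hC : ∀ x, -C ≤ g x) {x : ℝ} (hx : x < 0) : 0 ≤ g x := by
  have hk (y : ℝ) (hy : y < 0) : 0 ≤ smoothingKernel (b - l) y := by
    rw [smoothingKernel_eq hy.ne (by linarith)]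
    refine mul_nonneg (sq_nonneg _) (sub_nonneg.2 ?_)
    rw [div_le_div_iff₀ (by nlinarith) (by have := hy.ne; positivity)]
    nlinarith [mul_le_mul_of_nonneg_right hm1 (sq_nonneg y)]
  have hle (M : ℕ) : -(exp (-l) ^ M * C) ≤ g x := by
    rw [smoothing_iterate hg x M]
    have h1 : 0 ≤ ∑ n ∈ Finset.range M, exp (-l * n) * smoothingKernel (b - l) (x - n) :=
      Finset.sum_nonneg fun n _ => mul_nonneg (exp_pos _).le
        (hk _ (by have : (0 : ℝ) ≤ n := n.cast_nonneg; linarith))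
    have h2 := mul_le_mul_of_nonneg_left (hC (x - M)) (exp_pos (-l * M)).le
    rw [← exp_nat_mul, mul_comm (M : ℝ)]
    linarith
  have hlim : Filter.Tendsto (fun M : ℕ => -(exp (-l) ^ M * C)) Filter.atTop (nhds (-(0 * C))) :=
    ((tendsto_pow_atTop_nhds_zero_of_lt_one (exp_pos _).le
      (by rw [exp_lt_one_iff]; linarith)).mul_const C).neg
  simpa using le_of_tendsto' hlim hle

theorem exp_neg_le_smoothing (hl : 0 < l) (hb : b * (1 - exp (-l)) = l)
    (hg : ∀ x, g x = exp (-l) * g (x - 1) + smoothingKernel (b - l) x)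
    {C : ℝ} (hC : ∀ x, -C ≤ g x) {x : ℝ} (hx : 0 ≤ x) : exp (-(l * x)) ≤ g x := by
  have hel : exp (-l) * exp l = 1 := by rw [← exp_add]; simp
  have hb' : b = (b - l) * exp l := by
    linear_combination (-exp l) * hb + (-b) * hel
  have hm1 : b - l ≤ 1 := by
    have h1 := add_one_le_exp l
    have h2 : (b - l) * (exp l - 1) = l := by linear_combination -hb'
    by_contra! h3
    nlinarith
  have hm0 : 0 ≤ b - l := by
    have h1 := add_one_le_exp l
    have h2 : (b - l) * (exp l - 1) = l := by linear_combination -hb'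
    by_contra! h3
    nlinarith
  by_cases hmem : ∃ n : ℤ, x = n
  · obtain ⟨n, rfl⟩ := hmem
    lift n to ℕ using by exact_mod_cast hx
    clear hx
    have hs (n : ℕ) : sin (π * n) = 0 := by rw [mul_comm]; exact sin_nat_mul_pi n
    induction n with
    | zero =>
      have h1 := smoothing_nonneg hl hg hm1 hC (x := 0 - 1) (by norm_num)
      have h2 := hg 0
      have h3 : smoothingKernel (b - l) 0 = 1 := by simp [smoothingKernel]
      rw [h3] at h2
      simp only [Nat.cast_zero, Int.cast_zero, mul_zero, neg_zero, exp_zero]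
      nlinarith [mul_nonneg (exp_pos (-l)).le h1]
    | succ n ih =>
      simp only [Int.cast_natCast] at ih ⊢
      have h3 : smoothingKernel (b - l) (n + 1 : ℕ) = 0 := by
        rw [smoothingKernel, hs, sinc_of_ne_zero (mul_ne_zero pi_ne_zero (by positivity)), hs]
        simp
      rw [hg, h3, add_zero]
      have : exp (-(l * (n + 1 : ℕ))) = exp (-l) * exp (-(l * n)) := by
        rw [← exp_add]; congr 1; push_cast; ring
      rw [this]
      push_cast
      rw [add_sub_cancel_right]
      gcongr
  push Not at hmem
  have hx0 : 0 < x := lt_of_le_of_ne hx (by simpa using (hmem 0).symm)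
  have hsum := (hasSum_sq_sin_div hmem).nat_add_neg_add_one.tendsto_sum_nat
  have hsum2 := hsum.const_mul (exp (-(l * x)))
  rw [mul_one] at hsum2
  obtain ⟨M₀, hM₀⟩ := exists_nat_gt x
  refine le_of_tendsto hsum2 (Filter.eventually_atTop.2 ⟨M₀, fun M hM => ?_⟩)
  have hMx : x - M < 0 := by
    have : (M₀ : ℝ) ≤ M := by exact_mod_cast hM
    linarith
  rw [smoothing_iterate hg x M]
  have h1 := mul_nonneg (exp_pos (-l * M)).le (smoothing_nonneg hl hg hm1 hC hMx)
  have h2 : ∑ n ∈ Finset.range M, exp (-l * n) * smoothingKernel (b - l) (x - n) =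
      exp (-(l * x)) * (sin (π * x) / π) ^ 2 * ∑ n ∈ Finset.range M,
        exp (l * (x - n)) * (1 / (x - n) ^ 2 - (b - l) / ((x - n) * (x - n - 1))) := by
    rw [Finset.mul_sum]
    refine Finset.sum_congr rfl fun n _ => ?_
    have hs : sin (π * (x - n)) ^ 2 = sin (π * x) ^ 2 := by
      rw [mul_sub, mul_comm π n, sin_sub_nat_mul_pi, mul_pow, ← pow_mul, mul_comm n, pow_mul]
      norm_num
    have h3 : exp (-l * n) = exp (-(l * x)) * exp (l * (x - n)) := by
      rw [← exp_add]; congr 1; ring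
    rw [smoothingKernel_eq (sub_ne_zero.2 (by exact_mod_cast hmem n)), div_pow, hs, h3, div_pow]
    · ring
    · rw [ne_eq, sub_eq_iff_eq_add]; exact_mod_cast hmem (1 + n)
  rw [h2, smoothing_partial_sum hmem hb' M]
  have h4 := smoothing_sum_ge hl hb hx0 hmem M
  have h5 := sum_inv_sq_le hx0 M
  have h6 : b * exp (l * (x - M)) / (x - M) ≤ 0 :=
    div_nonpos_of_nonneg_of_nonpos (mul_nonneg (by linarith) (exp_pos _).le) hMx.le
  have h7 : ∑ n ∈ Finset.range M, ((sin (π * x) / π) ^ 2 * (1 / (x - (n : ℤ)) ^ 2) +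
      (sin (π * x) / π) ^ 2 * (1 / (x - (-((n : ℤ) + 1) : ℤ)) ^ 2)) =
      (sin (π * x) / π) ^ 2 * (∑ n ∈ Finset.range M, 1 / (x - n) ^ 2 +
        ∑ n ∈ Finset.range M, 1 / (x + (n + 1)) ^ 2) := by
    rw [Finset.sum_add_distrib, mul_add, Finset.mul_sum, Finset.mul_sum]
    congr 1
    refine Finset.sum_congr rfl fun n _ => ?_
    push_cast; rw [sub_neg_eq_add]
  rw [h7, ← mul_assoc]
  refine (mul_le_mul_of_nonneg_left ?_ (by positivity)).trans (le_add_of_nonneg_right h1)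
  linarith

end

set_option maxHeartbeats 1000000 in
theorem smoothing_norm_aux {l m p s c : ℝ} (hl : 0 < l) (hm : m * (1 - exp (-l)) = l * exp (-l))
    (hp : 0 ≤ p) (hs0 : 0 ≤ s) (hsp : s ≤ π * p) (hsc : s ^ 2 + c ^ 2 = 1)
    (h : c ≤ 0 ∨ 1 / 2 ≤ p) :
    l ^ 2 * (p ^ 2 + 2 * p * m * (s / π) * c + m ^ 2 * (s / π) ^ 2) ≤
      (1 + l) ^ 2 * p ^ 2 * ((1 - exp (-l)) ^ 2 + 4 * exp (-l) * s ^ 2) := by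
  have hcub : 1 + l + l ^ 2 / 2 + l ^ 3 / 6 ≤ exp l := by
    have := sum_le_exp_of_nonneg hl.le 4
    simpa [Finset.sum_range_succ, Nat.factorial] using this
  have her : exp (-l) * exp l = 1 := by rw [← exp_add]; simp
  have hr0 : 0 < exp (-l) := exp_pos _
  generalize exp (-l) = r at *
  have hD : r * (l ^ 2 / 2 + l ^ 3 / 6) ≤ 1 - r * (1 + l) := by
    nlinarith [mul_le_mul_of_nonneg_left hcub hr0.le]
  have hr1 : r * (1 + l + l ^ 2 / 2) ≤ 1 := by
    nlinarith [mul_pos hr0 (pow_pos hl 3)]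
  have hA : l ≤ (1 + l) * (1 - r) := by nlinarith [mul_pos hr0 (pow_pos hl 2)]
  have hA0 : 0 < 1 - r := by nlinarith
  have hm0 : 0 ≤ m := by
    by_contra! hneg
    nlinarith [mul_pos hl hr0]
  have hm1 : m ≤ r * (1 + l) := by
    refine le_of_mul_le_mul_right ?_ hA0
    rw [hm]; nlinarith
  have hm2 : m ≤ 1 := by nlinarith [mul_pos hr0 (pow_pos hl 2)]
  have hlr : l ^ 2 * r ≤ 2 := by nlinarith
  have hlm : l ^ 2 * m ^ 2 ≤ 2 * r * (1 + l) ^ 2 := by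
    have : m ^ 2 ≤ (r * (1 + l)) ^ 2 := pow_le_pow_left₀ hm0 hm1 2
    have h2 : l ^ 2 * r * (r * (1 + l) ^ 2) ≤ 2 * (r * (1 + l) ^ 2) := by gcongr
    nlinarith [mul_le_mul_of_nonneg_left this (sq_nonneg l)]
  -- `((1 + l) (1 - r))² = (l + D)²`
  have hsq : (l ^ 2 + r * (l ^ 3 + l ^ 4 / 3)) ≤ ((1 + l) * (1 - r)) ^ 2 := by
    have e : (1 + l) * (1 - r) = l + (1 - r * (1 + l)) := by ring
    rw [e]
    nlinarith [mul_le_mul_of_nonneg_left hD hl.le, sq_nonneg (1 - r * (1 + l))]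
  set q := s / π with hq
  have hq0 : 0 ≤ q := by positivity
  have hqp : q ≤ p := by rw [hq, div_le_iff₀ pi_pos]; linarith
  suffices hmain : l ^ 2 * (2 * p * m * q * c + m ^ 2 * q ^ 2) ≤
      p ^ 2 * (r * (l ^ 3 + l ^ 4 / 3)) + 4 * r * (1 + l) ^ 2 * p ^ 2 * s ^ 2 by
    have := mul_le_mul_of_nonneg_left hsq (sq_nonneg p)
    linarith
  have hpos : 0 ≤ p ^ 2 * (r * (l ^ 3 + l ^ 4 / 3)) := by positivity
  have hmq : m * q ≤ p := by nlinarith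
  by_cases hc : c ≤ 0
  · rcases le_or_gt c (-1 / 2) with hc2 | hc2
    · have h1 : 2 * p * m * q * c + m ^ 2 * q ^ 2 ≤ 0 := by
        have : 0 ≤ p * m * q := by positivity
        linarith [mul_nonneg (mul_nonneg hm0 hq0) (sub_nonneg.2 hmq),
          mul_le_mul_of_nonneg_left hc2 this]
      have h2 : 0 ≤ 4 * r * (1 + l) ^ 2 * p ^ 2 * s ^ 2 := by positivity
      linarith [mul_le_mul_of_nonneg_left h1 (sq_nonneg l)]
    · have hs34 : 3 / 4 ≤ s ^ 2 := by nlinarith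
      have h1 : 2 * p * m * q * c ≤ 0 := mul_nonpos_of_nonneg_of_nonpos (by positivity) hc
      have h2 : l ^ 2 * m ^ 2 * q ^ 2 ≤ 2 * r * (1 + l) ^ 2 * p ^ 2 := by gcongr
      have h3 : 4 * r * (1 + l) ^ 2 * p ^ 2 * (3 / 4) ≤ 4 * r * (1 + l) ^ 2 * p ^ 2 * s ^ 2 := by
        gcongr
      have h4 := mul_le_mul_of_nonneg_left h1 (sq_nonneg l)
      have h5 : 0 ≤ r * (1 + l) ^ 2 * p ^ 2 := by positivity
      linarith
  · have hp2 : 1 / 2 ≤ p := h.resolve_left hc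
    have hc1 : c ≤ 1 := by nlinarith
    have hq2 : q ≤ 2 / 3 * (p * s) := by
      rw [hq, div_le_iff₀ pi_pos]
      have := pi_gt_three
      nlinarith [mul_nonneg hs0 (sub_nonneg.2 hp2),
        mul_nonneg (mul_nonneg hs0 hp) (sub_nonneg.2 this.le)]
    have h1 : l ^ 2 * (2 * p * m * q * c) ≤
        l ^ 2 * (2 * p * (r * (1 + l)) * (2 / 3 * (p * s)) * 1) := by
      have : 0 < c := not_le.1 hc
      gcongr
    have h2 : l ^ 2 * m ^ 2 * q ^ 2 ≤ 2 * r * (1 + l) ^ 2 * (2 / 3 * (p * s)) ^ 2 := by gcongr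
    have h3 : 0 ≤ p ^ 2 * r * l ^ 3 := by positivity
    have h4 : 0 ≤ p ^ 2 * r * (l ^ 2 - 2 * ((1 + l) * s)) ^ 2 := by positivity
    have h5 : 0 ≤ p ^ 2 * r * ((1 + l) * s) ^ 2 := by positivity
    linarith

theorem integral_one_sub_mul_cos (x : ℝ) :
    ∫ t in (0 : ℝ)..1, (1 - t) * cos (2 * π * x * t) = sinc (π * x) ^ 2 / 2 := by
  rcases eq_or_ne x 0 with rfl | hx
  · have : ∫ t in (0 : ℝ)..1, (1 - t) = 1 / 2 := by
      rw [intervalIntegral.integral_sub (by simp) (by simp)]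
      norm_num
    simpa using this
  have hp := pi_ne_zero
  have hy : 2 * π * x ≠ 0 := by positivity
  have hd (t : ℝ) : HasDerivAt (fun t => (1 - t) * sin (2 * π * x * t) / (2 * π * x)
      - cos (2 * π * x * t) / (2 * π * x) ^ 2) ((1 - t) * cos (2 * π * x * t)) t := by
    have h1 : HasDerivAt (fun t => 2 * π * x * t) (2 * π * x) t := by
      simpa using (hasDerivAt_id' t).const_mul (2 * π * x)
    refine (((((hasDerivAt_id' t).const_sub 1).fun_mul h1.sin).div_const (2 * π * x)).fun_sub
      (h1.cos.div_const ((2 * π * x) ^ 2))).congr_deriv ?_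
    field_simp
    ring
  rw [intervalIntegral.integral_eq_sub_of_hasDerivAt (fun t _ => hd t)
    (Continuous.intervalIntegrable (by fun_prop) _ _), sinc_of_ne_zero (mul_ne_zero hp hx)]
  have h2 : cos (2 * π * x) = 1 - 2 * sin (π * x) ^ 2 := by
    rw [mul_assoc, cos_two_mul, cos_sq']; ring
  simp only [mul_one, sub_self, zero_mul, zero_div, mul_zero, sin_zero, cos_zero, h2]
  field_simp
  ring

theorem integral_sin_two_pi (x : ℝ) :
    ∫ t in (0 : ℝ)..1, sin (2 * π * x * t) = sin (π * x) ^ 2 / (π * x) := by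
  rcases eq_or_ne x 0 with rfl | hx
  · simp
  have hp := pi_ne_zero
  have hy : 2 * π * x ≠ 0 := by positivity
  have hd (t : ℝ) : HasDerivAt (fun t => - cos (2 * π * x * t) / (2 * π * x))
      (sin (2 * π * x * t)) t := by
    have h1 : HasDerivAt (fun t => 2 * π * x * t) (2 * π * x) t := by
      simpa using (hasDerivAt_id' t).const_mul (2 * π * x)
    refine (h1.cos.fun_neg.div_const (2 * π * x)).congr_deriv ?_
    field_simp
  rw [intervalIntegral.integral_eq_sub_of_hasDerivAt (fun t _ => hd t)
    (Continuous.intervalIntegrable (by fun_prop) _ _)]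
  have h2 : cos (2 * π * x) = 1 - 2 * sin (π * x) ^ 2 := by
    rw [mul_assoc, cos_two_mul, cos_sq']; ring
  simp only [mul_one, mul_zero, cos_zero, h2]
  field_simp
  ring

/-- The (one-sided) Fourier transform of the Graham–Vaaler majorant of the truncated exponential. -/
noncomputable def majorantFourier (l m t : ℝ) : ℂ :=
  ((1 - t : ℝ) + (m * (sin (π * t) / π) : ℝ) * Complex.exp ((-(π * t) : ℝ) * Complex.I)) /
    (1 - (exp (-l) : ℝ) * Complex.exp ((-(2 * π * t) : ℝ) * Complex.I))

/-- A band-limited majorant of `exp (-(l * x))` truncated to `0 ≤ x`. -/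
noncomputable def truncExpMajorant (l m x : ℝ) : ℝ :=
  2 * ∫ t in (0 : ℝ)..1, (majorantFourier l m t * Complex.exp ((2 * π * x * t : ℝ) * Complex.I)).re

theorem majorantFourier_den_ne_zero {l : ℝ} (hl : 0 < l) (t : ℝ) :
    (1 - (exp (-l) : ℝ) * Complex.exp ((-(2 * π * t) : ℝ) * Complex.I)) ≠ 0 := by
  intro h
  have h1 := congrArg norm (sub_eq_zero.1 h)
  rw [norm_mul, Complex.norm_exp_ofReal_mul_I, mul_one, norm_one, Complex.norm_real,
    norm_of_nonneg (exp_pos _).le] at h1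
  have : exp (-l) < 1 := by rw [exp_lt_one_iff]; linarith
  linarith

theorem continuous_majorantFourier {l : ℝ} (hl : 0 < l) (m : ℝ) :
    Continuous (majorantFourier l m) := by
  unfold majorantFourier
  exact Continuous.div (by fun_prop) (by fun_prop) (majorantFourier_den_ne_zero hl)

theorem norm_majorantFourier_le {l m t : ℝ} (hl : 0 < l)
    (hm : m * (1 - exp (-l)) = l * exp (-l)) (ht0 : 0 ≤ t) (ht1 : t ≤ 1) :
    ‖majorantFourier l m t‖ ≤ (1 + 1 / l) * (1 - t) := by
  have hs0 : 0 ≤ sin (π * t) := sin_nonneg_of_nonneg_of_le_pi (by positivity)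
    (by nlinarith [pi_pos])
  have hsp : sin (π * t) ≤ π * (1 - t) := by
    rw [← sin_pi_sub, show π - π * t = π * (1 - t) by ring]
    exact sin_le (mul_nonneg pi_pos.le (by linarith))
  have hc : cos (π * t) ≤ 0 ∨ 1 / 2 ≤ 1 - t := by
    rcases le_or_gt t (1 / 2) with h | h
    · right; linarith
    · left
      exact cos_nonpos_of_pi_div_two_le_of_le (by nlinarith [pi_pos]) (by nlinarith [pi_pos])
  have key := smoothing_norm_aux hl hm (sub_nonneg.2 ht1) hs0 hsp (sin_sq_add_cos_sq _) hc
  rw [majorantFourier, norm_div, div_le_iff₀ (norm_pos_iff.2 (majorantFourier_den_ne_zero hl t))]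
  refine le_of_sq_le_sq ?_ (by
    have : 0 ≤ 1 - t := by linarith
    positivity)
  have hn (a b θ : ℝ) : ‖(a : ℂ) + (b : ℂ) * Complex.exp ((θ : ℝ) * Complex.I)‖ ^ 2 =
      a ^ 2 + 2 * a * b * cos θ + b ^ 2 := by
    rw [← Complex.normSq_eq_norm_sq, Complex.normSq_apply]
    simp only [Complex.add_re, Complex.add_im, Complex.ofReal_re, Complex.ofReal_im,
      Complex.re_ofReal_mul, Complex.im_ofReal_mul, Complex.exp_ofReal_mul_I_re,
      Complex.exp_ofReal_mul_I_im]
    linear_combination b ^ 2 * sin_sq_add_cos_sq θ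
  have hn1 := hn (1 - t) (m * (sin (π * t) / π)) (-(π * t))
  have hn2 := hn 1 (-exp (-l)) (-(2 * π * t))
  rw [Complex.ofReal_one, Complex.ofReal_neg, neg_mul, ← sub_eq_add_neg] at hn2
  rw [mul_pow, hn1, hn2, cos_neg, cos_neg, mul_assoc 2 π t, cos_two_mul]
  have h3 : (1 + 1 / l) * (1 - t) = (1 + l) * (1 - t) / l := by field_simp; ring
  rw [h3, div_pow, div_mul_eq_mul_div, le_div_iff₀ (by positivity), cos_sq']
  linarith

theorem truncExpMajorant_eq {l : ℝ} (hl : 0 < l) (m x : ℝ) :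
    truncExpMajorant l m x = exp (-l) * truncExpMajorant l m (x - 1) + smoothingKernel m x := by
  have hc := continuous_majorantFourier hl m
  have hi (x : ℝ) : IntervalIntegrable (fun t => (majorantFourier l m t *
      Complex.exp ((2 * π * x * t : ℝ) * Complex.I)).re) volume 0 1 :=
    Continuous.intervalIntegrable (by fun_prop) _ _
  have key (t : ℝ) : (majorantFourier l m t * Complex.exp ((2 * π * x * t : ℝ) * Complex.I)).re -
      exp (-l) * (majorantFourier l m t * Complex.exp ((2 * π * (x - 1) * t : ℝ) * Complex.I)).re =
      (1 - t) * cos (2 * π * x * t) +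
        m / (2 * π) * (sin (2 * π * x * t) - sin (2 * π * (x - 1) * t)) := by
    rw [← Complex.re_ofReal_mul, ← Complex.sub_re]
    have h1 : Complex.exp ((2 * π * (x - 1) * t : ℝ) * Complex.I) =
        Complex.exp ((-(2 * π * t) : ℝ) * Complex.I) *
          Complex.exp ((2 * π * x * t : ℝ) * Complex.I) := by
      rw [← Complex.exp_add]; congr 1; push_cast; ring
    have h2 : majorantFourier l m t * Complex.exp ((2 * π * x * t : ℝ) * Complex.I) -
        (exp (-l) : ℝ) * (majorantFourier l m t *
          Complex.exp ((2 * π * (x - 1) * t : ℝ) * Complex.I)) =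
        (1 - t : ℝ) * Complex.exp ((2 * π * x * t : ℝ) * Complex.I) +
          (m * (sin (π * t) / π) : ℝ) * Complex.exp ((2 * π * x * t - π * t : ℝ) * Complex.I) := by
      have h3 : Complex.exp ((2 * π * x * t - π * t : ℝ) * Complex.I) =
          Complex.exp ((-(π * t) : ℝ) * Complex.I) *
            Complex.exp ((2 * π * x * t : ℝ) * Complex.I) := by
        rw [← Complex.exp_add]; congr 1; push_cast; ring
      have h4 := div_mul_cancel₀ ((1 - t : ℝ) + (m * (sin (π * t) / π) : ℝ) *
        Complex.exp ((-(π * t) : ℝ) * Complex.I)) (majorantFourier_den_ne_zero hl t)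
      change majorantFourier l m t * _ = _ at h4
      rw [h1, h3]
      linear_combination Complex.exp ((2 * π * x * t : ℝ) * Complex.I) * h4
    rw [h2, Complex.add_re, Complex.re_ofReal_mul, Complex.re_ofReal_mul,
      Complex.exp_ofReal_mul_I_re, Complex.exp_ofReal_mul_I_re, sin_sub_sin]
    rw [show (2 * π * x * t - 2 * π * (x - 1) * t) / 2 = π * t by ring,
      show (2 * π * x * t + 2 * π * (x - 1) * t) / 2 = 2 * π * x * t - π * t by ring]
    field_simp
  have hmem : truncExpMajorant l m x - exp (-l) * truncExpMajorant l m (x - 1) =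
      2 * ∫ t in (0 : ℝ)..1, ((1 - t) * cos (2 * π * x * t) +
        m / (2 * π) * (sin (2 * π * x * t) - sin (2 * π * (x - 1) * t))) := by
    rw [truncExpMajorant, truncExpMajorant, mul_left_comm, ← mul_sub,
      ← intervalIntegral.integral_const_mul, ← intervalIntegral.integral_sub (hi x)
        ((hi (x - 1)).const_mul _)]
    simp_rw [key]
  rw [← sub_eq_iff_eq_add', hmem,
    intervalIntegral.integral_add (Continuous.intervalIntegrable (by fun_prop) _ _)
      (Continuous.intervalIntegrable (by fun_prop) _ _), intervalIntegral.integral_const_mul,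
    intervalIntegral.integral_sub (Continuous.intervalIntegrable (by fun_prop) _ _)
      (Continuous.intervalIntegrable (by fun_prop) _ _), integral_one_sub_mul_cos,
    integral_sin_two_pi, integral_sin_two_pi, smoothingKernel]
  have hs : sin (π * (x - 1)) ^ 2 = sin (π * x) ^ 2 := by
    rw [mul_sub, mul_one, sin_sub_pi, neg_sq]
  rw [hs, mul_add, mul_div_cancel₀ _ two_ne_zero]
  have e (y : ℝ) : sin (π * x) ^ 2 / (π ^ 2 * y) = 1 / π * (sin (π * x) ^ 2 / (π * y)) := by
    rw [div_mul_div_comm]; ring_nf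
  rw [e, e]
  field_simp

theorem abs_truncExpMajorant_le {l m : ℝ} (hl : 0 < l)
    (hm : m * (1 - exp (-l)) = l * exp (-l)) (x : ℝ) :
    |truncExpMajorant l m x| ≤ 2 * (1 + 1 / l) := by
  rw [truncExpMajorant, abs_mul, abs_two]
  refine mul_le_mul_of_nonneg_left ?_ zero_le_two
  have h := intervalIntegral.norm_integral_le_of_norm_le_const (a := 0) (b := 1)
    (C := 1 + 1 / l) (f := fun t => (majorantFourier l m t *
      Complex.exp ((2 * π * x * t : ℝ) * Complex.I)).re) fun t ht => ?_
  · simpa using h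
  · rw [Set.uIoc_of_le zero_le_one] at ht
    refine (Complex.abs_re_le_norm _).trans ?_
    rw [norm_mul, Complex.norm_exp_ofReal_mul_I, mul_one]
    refine (norm_majorantFourier_le hl hm ht.1.le ht.2).trans ?_
    have : 0 ≤ 1 + 1 / l := by positivity
    nlinarith [ht.1]

theorem integral_truncExpMajorant (P : Measure ℝ) [IsProbabilityMeasure P] {l : ℝ} (hl : 0 < l)
    {m : ℝ} (hm : m * (1 - exp (-l)) = l * exp (-l)) :
    Integrable (truncExpMajorant l m) P ∧ ∫ x, truncExpMajorant l m x ∂P =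
      2 * ∫ t in (0 : ℝ)..1, (majorantFourier l m t * charFun P (2 * π * t)).re := by
  have hc := continuous_majorantFourier hl m
  have hmem : Integrable (fun z : ℝ × ℝ => (majorantFourier l m z.2 *
      Complex.exp ((2 * π * z.1 * z.2 : ℝ) * Complex.I)).re)
      (P.prod (volume.restrict (Set.Ioc 0 1))) := by
    refine Integrable.of_bound (C := 1 + 1 / l) (by
      refine Continuous.aestronglyMeasurable ?_
      fun_prop) ?_
    have h2 : ∀ᵐ z ∂(P.prod (volume.restrict (Set.Ioc (0 : ℝ) 1))), z.2 ∈ Set.Ioc (0 : ℝ) 1 :=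
      Measure.quasiMeasurePreserving_snd.ae (ae_restrict_mem measurableSet_Ioc)
    filter_upwards [h2] with z hz
    refine (Complex.abs_re_le_norm _).trans ?_
    rw [norm_mul, Complex.norm_exp_ofReal_mul_I, mul_one]
    refine (norm_majorantFourier_le hl hm hz.1.le hz.2).trans ?_
    have : 0 ≤ 1 + 1 / l := by positivity
    nlinarith [hz.1]
  constructor
  · have := hmem.integral_prod_left.const_mul 2
    refine this.congr (Filter.Eventually.of_forall fun x => ?_)
    simp only [truncExpMajorant, intervalIntegral.integral_of_le zero_le_one]
  · simp only [truncExpMajorant, intervalIntegral.integral_of_le zero_le_one]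
    rw [integral_const_mul, integral_integral_swap hmem]
    congr 2 with t
    rw [charFun_apply_real, ← integral_const_mul]
    have hi : Integrable (fun x : ℝ => majorantFourier l m t *
        Complex.exp ((2 * π * t : ℝ) * x * Complex.I)) P := by
      refine Integrable.of_bound (C := ‖majorantFourier l m t‖) (by
        refine Continuous.aestronglyMeasurable ?_
        fun_prop) (Filter.Eventually.of_forall fun x => ?_)
      rw [norm_mul, ← Complex.ofReal_mul, Complex.norm_exp_ofReal_mul_I, mul_one]
    have := integral_re hi
    simp only [RCLike.re_to_complex] at this
    rw [← this]
    congr 1 with x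
    congr 3
    push_cast
    ring

/-- A smoothing inequality: the Laplace transform of a law restricted to the half-line is controlled
by its characteristic function on `[0, 2 * π]`. -/
theorem setIntegral_Ici_exp_neg_le (P : Measure ℝ) [IsProbabilityMeasure P] {l : ℝ} (hl : 0 < l) :
    ∫ v in Set.Ici 0, exp (-(l * v)) ∂P ≤
      2 * (1 + 1 / l) * ∫ t in (0 : ℝ)..1, (1 - t) * ‖charFun P (2 * π * t)‖ := by
  have he : 0 < 1 - exp (-l) := sub_pos.2 (exp_lt_one_iff.2 (by linarith))
  set b := l / (1 - exp (-l)) with hb_def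
  have hb : b * (1 - exp (-l)) = l := div_mul_cancel₀ _ he.ne'
  have hm : (b - l) * (1 - exp (-l)) = l * exp (-l) := by linear_combination hb
  have hm1 : b - l ≤ 1 := by
    have h1 : l * exp (-l) ≤ 1 - exp (-l) := by
      have h2 := add_one_le_exp l
      have h3 : exp (-l) * exp l = 1 := by rw [← exp_add]; simp
      nlinarith [exp_pos (-l)]
    rw [← hm] at h1
    exact le_of_mul_le_mul_right (by linarith) he
  have hg := truncExpMajorant_eq hl (b - l)
  have hC (x : ℝ) := (abs_le.1 (abs_truncExpMajorant_le hl hm x)).1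
  obtain ⟨hi, heq⟩ := integral_truncExpMajorant P hl hm
  have hcF : Continuous (charFun P) := continuous_charFun
  have hcM := continuous_majorantFourier hl (b - l)
  calc
    _ = ∫ v, (Set.Ici 0).indicator (fun v => exp (-(l * v))) v ∂P :=
      (integral_indicator measurableSet_Ici).symm
    _ ≤ ∫ v, truncExpMajorant l (b - l) v ∂P := by
      refine integral_mono_of_nonneg (Filter.Eventually.of_forall fun v =>
        Set.indicator_nonneg (fun v _ => (exp_pos _).le) v) hi
        (Filter.Eventually.of_forall fun v => ?_)
      by_cases hv : 0 ≤ v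
      · rw [Set.indicator_of_mem (by exact hv)]
        exact exp_neg_le_smoothing hl hb hg hC hv
      · rw [Set.indicator_of_notMem (by exact hv)]
        exact smoothing_nonneg hl hg hm1 hC (not_le.1 hv)
    _ = 2 * ∫ t in (0 : ℝ)..1, (majorantFourier l (b - l) t * charFun P (2 * π * t)).re := heq
    _ ≤ 2 * ∫ t in (0 : ℝ)..1, (1 + 1 / l) * ((1 - t) * ‖charFun P (2 * π * t)‖) := by
      refine mul_le_mul_of_nonneg_left (intervalIntegral.integral_mono_on zero_le_one
        (Continuous.intervalIntegrable (by fun_prop) _ _)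
        (Continuous.intervalIntegrable (by fun_prop) _ _) fun t ht => ?_) zero_le_two
      refine (Complex.re_le_norm _).trans ?_
      rw [norm_mul, ← mul_assoc]
      exact mul_le_mul_of_nonneg_right (norm_majorantFourier_le hl hm ht.1 ht.2) (norm_nonneg _)
    _ = _ := by rw [intervalIntegral.integral_const_mul]; ring

theorem one_le_integral_abs_pow_three {P : Measure ℝ} [IsProbabilityMeasure P]
    (h3 : Integrable (fun x => |x| ^ 3) P) (hvar : ∫ x, x ^ 2 ∂P = 1) :
    1 ≤ ∫ x, |x| ^ 3 ∂P := by
  have h2 : Integrable (fun x : ℝ => x ^ 2) P := by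
    by_contra h
    rw [integral_undef h] at hvar
    exact zero_ne_one hvar
  calc (1 : ℝ) = ∫ x, (3 / 2 * x ^ 2 - 1 / 2) ∂P := by
        rw [integral_sub (h2.const_mul _) (integrable_const _), integral_const_mul, hvar]
        norm_num
    _ ≤ _ := integral_mono ((h2.const_mul _).sub (integrable_const _)) h3 fun x => by
      have := abs_nonneg x
      simp only
      rw [← sq_abs]
      nlinarith [mul_nonneg (sq_nonneg (|x| - 1)) (by positivity : 0 ≤ |x| + 1 / 2)]

/-- A one-sided Berry–Esseen type bound for exponentially damped sums of i.i.d.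
standardized variables. -/
theorem setIntegral_exp_neg_sum_le {P : Measure ℝ} [IsProbabilityMeasure P]
    (h3 : Integrable (fun x => |x| ^ 3) P) (hmean : ∫ x, x ∂P = 0) (hvar : ∫ x, x ^ 2 ∂P = 1)
    {N : ℕ} (hN : 0 < N) {c : ℝ} (hc : 0 < c) :
    ∫ x in {x : Fin N → ℝ | 0 ≤ ∑ i, x i}, exp (-(c * ∑ i, x i)) ∂(Measure.pi fun _ => P) ≤
      1 / √N * ((∫ x, |x| ^ 3 ∂P) + 1 / (c * √(2 * π))) := by
  have hρ := one_le_integral_abs_pow_three h3 hvar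
  set ρ := ∫ x, |x| ^ 3 ∂P with hρ_def
  have hρ0 : 0 < ρ := by linarith
  set S := √(2 * π) / ρ with hS
  have h2π : 0 < √(2 * π) := sqrt_pos.2 (by positivity)
  have hS0 : 0 < S := by positivity
  have hm : Measurable fun x : Fin N → ℝ => ∑ i, x i := by fun_prop
  have hm' : Measurable fun x : Fin N → ℝ => S / (2 * π) * ∑ i, x i := hm.const_mul _
  set Q := (Measure.pi fun _ : Fin N => P).map fun x => S / (2 * π) * ∑ i, x i with hQ
  have : IsProbabilityMeasure Q := Measure.isProbabilityMeasure_map hm'.aemeasurable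
  set l := 2 * π * c / S with hl
  have hl0 : 0 < l := by positivity
  have hchar (t : ℝ) : ‖charFun Q (2 * π * t)‖ = ‖charFun P (S * t)‖ ^ N := by
    rw [hQ, charFun_map_mul_comp hm.aemeasurable, charFun_map_sum_pi_eq_prod]
    have : S / (2 * π) * (2 * π * t) = S * t := by field_simp
    simp [this]
  have h1 := setIntegral_Ici_exp_neg_le Q hl0
  simp only [hchar] at h1
  have h2 := integral_one_sub_mul_pow_le (F := fun s => ‖charFun P s‖)
    (continuous_charFun.norm) (fun s => norm_nonneg _) hρ
    (fun s hs => sq_norm_charFun_le h3 hmean hvar hρ_def.symm hs) hN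
  rw [hQ, setIntegral_map measurableSet_Ici (by
    refine Continuous.aestronglyMeasurable ?_
    fun_prop) hm'.aemeasurable] at h1
  have hset : (fun x : Fin N → ℝ => S / (2 * π) * ∑ i, x i) ⁻¹' Set.Ici 0 =
      {x : Fin N → ℝ | 0 ≤ ∑ i, x i} := by
    ext x
    exact mul_nonneg_iff_of_pos_left (show 0 < S / (2 * π) by positivity)
  have hexp (y : ℝ) : l * (S / (2 * π) * y) = c * y := by rw [hl]; field_simp
  simp only [hset, hexp] at h1
  refine (h1.trans (mul_le_mul_of_nonneg_left h2 (by positivity))).trans_eq ?_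
  have hN' : (0 : ℝ) < √N := sqrt_pos.2 (by exact_mod_cast hN)
  have h4 : √(π / (2 * N)) = √(2 * π) / (2 * √N) := by
    rw [sqrt_eq_iff_mul_self_eq (by positivity) (by positivity)]
    have := mul_self_sqrt (show 0 ≤ 2 * π by positivity)
    have := mul_self_sqrt (Nat.cast_nonneg (α := ℝ) N)
    have hN'' : (0 : ℝ) < N := by exact_mod_cast hN
    rw [div_mul_div_comm, mul_mul_mul_comm]
    simp only [*]
    field_simp
  have h5 : 2 * π = √(2 * π) * √(2 * π) := (mul_self_sqrt (by positivity)).symm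
  have hl1 : 1 / l = 1 / (c * √(2 * π) * ρ) := by
    rw [hl, hS]
    nth_rw 1 [h5]
    field_simp
  rw [h4, hl1]
  field_simp

theorem pi_tilted {ι α : Type*} [Fintype ι] [MeasurableSpace α] (μ : Measure α)
    [IsProbabilityMeasure μ] {f : α → ℝ} (hf : Integrable (fun x => exp (f x)) μ) :
    (Measure.pi fun _ : ι => μ.tilted f) =
      (Measure.pi fun _ : ι => μ).tilted fun z => ∑ i, f (z i) := by
  have := isProbabilityMeasure_tilted hf
  refine Measure.pi_eq fun s _ => ?_
  simp only [tilted_apply_eq_ofReal_integral]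
  rw [← ENNReal.ofReal_prod_of_nonneg fun i _ => integral_nonneg fun x => by positivity]
  congr 1
  rw [← integral_fintype_prod_eq_prod (𝕜 := ℝ) (fun _ x => exp (f x) / ∫ x, exp (f x) ∂μ),
    ← Measure.restrict_pi_pi]
  congr 1 with z
  simp only [exp_sum]
  rw [integral_fintype_prod_eq_prod (𝕜 := ℝ) (fun _ x => exp (f x)), Finset.prod_div_distrib]

theorem pi_real_eq_integral_tilted {ι α : Type*} [Fintype ι] [MeasurableSpace α] (μ : Measure α)
    [IsProbabilityMeasure μ] {f : α → ℝ} (hf : Integrable (fun x => exp (f x)) μ)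
    (A : Set (ι → α)) : (Measure.pi fun _ : ι => μ).real A = (∫ x, exp (f x) ∂μ) ^ Fintype.card ι *
      ∫ z in A, exp (-∑ i, f (z i)) ∂(Measure.pi fun _ : ι => μ.tilted f) := by
  have := isProbabilityMeasure_tilted hf
  have h0 : Integrable (fun x => exp ((-f) x)) (μ.tilted f) := by
    refine (integrable_tilted_iff hf _).2 ?_
    simp [← exp_add]
  have h1 : (∫ x, exp (-f x) ∂(μ.tilted f)) = (∫ x, exp (f x) ∂μ)⁻¹ := by
    have := integral_exp_tilted (μ := μ) f (-f)
    simpa using this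
  have h2 := pi_tilted (ι := ι) (μ.tilted f) h0
  rw [tilted_neg_same hf] at h2
  rw [h2, Measure.real, tilted_apply_eq_ofReal_integral, ENNReal.toReal_ofReal
    (integral_nonneg fun x => by positivity), integral_div]
  have h3 : ∫ z : ι → α, exp (∑ i, (-f) (z i)) ∂(Measure.pi fun _ : ι => μ.tilted f) =
      ((∫ x, exp (f x) ∂μ)⁻¹) ^ Fintype.card ι := by
    rw [← h1, ← integral_fintype_prod_eq_pow]
    simp [← exp_sum]
  rw [h3]
  simp [div_eq_mul_inv, mul_comm]

/-- At `q = deriv Λ η` the Legendre transform of the cumulant generating function `Λ` is at most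
`η * q - Λ η`. -/
theorem sSup_mul_sub_cgf_le {ν : Measure ℝ} [IsProbabilityMeasure ν] {q η : ℝ}
    (hη : η ∈ interior (integrableExpSet id ν)) (hq : deriv (cgf id ν) η = q) :
    sSup (Set.range fun t => t * q - cgf id ν t) ≤ η * q - cgf id ν η := by
  have hηi : Integrable (fun z => exp (η * z)) ν :=
    interior_subset (s := integrableExpSet id ν) hη
  have hpos : 0 < mgf id ν η := mgf_pos hηi
  have hzi : Integrable (fun z => z * exp (η * z)) ν := by
    simpa using integrable_pow_mul_exp_of_mem_interior_integrableExpSet hη 1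
  have hz : ∫ z, z * exp (η * z) ∂ν = q * mgf id ν η := by
    rw [← hq, deriv_cgf hη, div_mul_cancel₀ _ hpos.ne']
    rfl
  have tangent {t : ℝ} (ht : Integrable (fun z => exp (t * z)) ν) :
      t * q - cgf id ν t ≤ η * q - cgf id ν η := by
    set c := (t - η) * q with hc
    have hle : exp c * mgf id ν η ≤ mgf id ν t := by
      calc exp c * mgf id ν η
          = ∫ z, exp c * ((1 - c) * exp (η * z) + (t - η) * (z * exp (η * z))) ∂ν := by
            rw [integral_const_mul, integral_add (hηi.const_mul _) (hzi.const_mul _),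
              integral_const_mul, integral_const_mul, hz]
            change _ = _ * ((1 - c) * mgf id ν η + _)
            rw [hc]
            ring
        _ ≤ mgf id ν t := by
            refine integral_mono (((hηi.const_mul _).add (hzi.const_mul _)).const_mul _) ht
              fun z => ?_
            have h1 := add_one_le_exp ((t - η) * z - c)
            have h2 : exp (t * z) = exp c * exp (η * z) * exp ((t - η) * z - c) := by
              rw [← exp_add, ← exp_add]
              ring_nf
            simp only [id_eq, h2]
            nlinarith [mul_le_mul_of_nonneg_left h1 (mul_pos (exp_pos c) (exp_pos (η * z))).le]
    have := log_le_log (by positivity) hle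
    rw [log_mul (exp_pos c).ne' hpos.ne', log_exp] at this
    simp only [cgf]
    linarith
  have h0 : 0 ≤ η * q - cgf id ν η := by
    simpa using tangent (t := 0) (by simp)
  by_cases hb : BddAbove (Set.range fun t => t * q - cgf id ν t)
  swap
  · rwa [sSup_of_not_bddAbove hb]
  refine csSup_le (Set.range_nonempty _) ?_
  rintro _ ⟨t, rfl⟩
  by_cases ht : Integrable (fun z => exp (t * z)) ν
  · exact tangent ht
  refine le_trans ?_ h0
  have hcgf (t : ℝ) (ht : ¬ Integrable (fun z => exp (t * z)) ν) : cgf id ν t = 0 :=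
    cgf_undef ht
  simp only [hcgf t ht, sub_zero]
  by_contra! hpos'
  obtain ⟨B, hB⟩ := hb
  have hr (r : ℝ) (hr : 1 ≤ r) : ¬ Integrable (fun z => exp ((r * t) * z)) ν := fun hi => by
    have := (convex_integrableExpSet (X := id) (μ := ν)).starConvex (x := 0)
      (by simp [integrableExpSet])
      |>.smul_mem (x := r * t) hi (t := r⁻¹) (by positivity) (inv_le_one_of_one_le₀ hr)
    rw [smul_eq_mul, inv_mul_cancel_left₀ (by positivity)] at this
    exact ht this
  have h1 : 1 ≤ 1 + |B| / (t * q) := by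
    have : 0 ≤ |B| / (t * q) := by positivity
    linarith
  have h2 := hB ⟨(1 + |B| / (t * q)) * t, rfl⟩
  simp only [hcgf _ (hr _ h1)] at h2
  have h3 : (1 + |B| / (t * q)) * t * q = t * q + |B| := by
    rw [mul_assoc, add_mul, div_mul_cancel₀ _ hpos'.ne']
    ring
  linarith [le_abs_self B]

theorem setIntegral_exp_neg_sum_sub_le {Q : Measure ℝ} [IsProbabilityMeasure Q]
    (h3 : MemLp id 3 Q) {q : ℝ} (hq : ∫ x, x ∂Q = q) (hvar : 0 < variance id Q)
    {N : ℕ} (hN : 0 < N) {η : ℝ} (hη : 0 < η) :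
    ∫ z in {z : Fin N → ℝ | 0 ≤ ∑ i, (z i - q)}, exp (-(η * ∑ i, (z i - q)))
        ∂(Measure.pi fun _ => Q) ≤
      1 / √N * ((∫ z, |z - q| ^ 3 ∂Q) / variance id Q ^ ((3 : ℝ) / 2) +
        1 / (η * √(2 * π * variance id Q))) := by
  set v := variance id Q with hv
  set σ := √v with hσ
  have hσ0 : 0 < σ := sqrt_pos.2 hvar
  have hσ2 : σ ^ 2 = v := sq_sqrt hvar.le
  have hm : Measurable fun z : ℝ => (z - q) / σ := by fun_prop
  set P := Q.map fun z => (z - q) / σ with hP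
  have : IsProbabilityMeasure P := Measure.isProbabilityMeasure_map hm.aemeasurable
  have h3q : Integrable (fun z => |z - q| ^ 3) Q := by
    have := (h3.sub (memLp_const q)).integrable_norm_pow (p := 3) (by norm_num)
    simpa using this
  have hi : Integrable (fun z : ℝ => z) Q := h3.integrable (by norm_num)
  have hrho : ∫ x, |x| ^ 3 ∂P = (∫ z, |z - q| ^ 3 ∂Q) / v ^ ((3 : ℝ) / 2) := by
    rw [hP, integral_map hm.aemeasurable (by
      refine Continuous.aestronglyMeasurable ?_
      fun_prop), ← integral_div]
    congr 1 with z
    rw [abs_div, div_pow, abs_of_pos hσ0, ← hσ2, ← rpow_natCast σ 2, ← rpow_mul hσ0.le]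
    norm_num
  have key := setIntegral_exp_neg_sum_le (P := P) (by
      rw [hP, integrable_map_measure (by
        refine Continuous.aestronglyMeasurable ?_
        fun_prop) hm.aemeasurable]
      refine (h3q.div_const (σ ^ 3)).congr (Filter.Eventually.of_forall fun z => ?_)
      simp [abs_div, div_pow, abs_of_pos hσ0]) (by
      rw [hP, integral_map hm.aemeasurable (by
        refine Continuous.aestronglyMeasurable ?_
        fun_prop), integral_div, integral_sub hi (integrable_const _), hq]
      simp) (by
      rw [hP, integral_map hm.aemeasurable (by
        refine Continuous.aestronglyMeasurable ?_
        fun_prop)]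
      simp only [div_pow, hσ2]
      rw [integral_div, div_eq_one_iff_eq hvar.ne', hv, variance_eq_integral (by fun_prop)]
      simp [hq]) hN (mul_pos hη hσ0)
  have hmp : Measurable fun (z : Fin N → ℝ) i => (z i - q) / σ := by fun_prop
  have hpi : (Measure.pi fun _ : Fin N => P) =
      (Measure.pi fun _ : Fin N => Q).map fun z i => (z i - q) / σ :=
    (Measure.pi_map_pi fun _ => hm.aemeasurable).symm
  rw [hpi, setIntegral_map (measurableSet_le measurable_const (by fun_prop)) (by
    refine Continuous.aestronglyMeasurable ?_
    fun_prop) hmp.aemeasurable, hrho] at key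
  have hset : (fun (z : Fin N → ℝ) i => (z i - q) / σ) ⁻¹' {x : Fin N → ℝ | 0 ≤ ∑ i, x i} =
      {z : Fin N → ℝ | 0 ≤ ∑ i, (z i - q)} := by
    ext z
    simp only [Set.mem_preimage, Set.mem_ofPred_eq, ← Finset.sum_div]
    exact ⟨fun h => by simpa [hσ0.ne'] using mul_nonneg h hσ0.le, fun h => by positivity⟩
  have hexp (z : Fin N → ℝ) : η * σ * ∑ i, (z i - q) / σ = η * ∑ i, (z i - q) := by
    rw [← Finset.sum_div]
    field_simp
  simp only [hset, hexp] at key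
  refine key.trans_eq ?_
  rw [sqrt_mul (by positivity) v, ← hσ]
  ring

theorem variance_tilted_mul_pos {ν : Measure ℝ} [IsProbabilityMeasure ν] {η : ℝ}
    (hη : η ∈ interior (integrableExpSet id ν)) (hVar : 0 < variance id ν) :
    0 < variance id (ν.tilted (η * id ·)) := by
  have hi : Integrable (fun z => exp (η * id z)) ν :=
    interior_subset (s := integrableExpSet id ν) hη
  have := isProbabilityMeasure_tilted hi
  refine (variance_nonneg _ _).lt_of_ne' fun h => hVar.ne' ?_
  have h1 := (absolutelyContinuous_tilted hi).ae_le
    (ae_eq_integral_of_variance_eq_zero (memLp_tilted_mul hη 2) h)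
  rw [variance_congr (Y := fun _ => ∫ x, id x ∂(ν.tilted (η * id ·))) h1]
  simp [variance_eq_integral]

/-- Concentration upper bound for sums of i.i.d. real random variables
(Lemma on exact pre-factor): if `Λ(λ) = log E[e^{λ Z}]` is finite near `η > 0`
with `Λ'(η) = q`, then the law `μ_N` of the empirical mean of `N` i.i.d.
copies of `Z ∼ ν` satisfies
`μ_N([q,∞)) ≤ e^{-N Λ*(q)} N^{-1/2} (m₃/Λ''(η)^{3/2} + 1/(η √(2π Λ''(η))))`,
where `m₃` is the third absolute central moment under the tilted law `ν̃`. -/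
theorem statement19
    (ν : Measure ℝ) [IsProbabilityMeasure ν]
    (hVar : 0 < variance id ν)
    (N : ℕ) (hN : 0 < N)
    (q η : ℝ) (hη : 0 < η)
    (Λ : ℝ → ℝ) (hΛ : Λ = fun t => Real.log (∫ z, Real.exp (t * z) ∂ν))
    (hfin : ∀ᶠ t in nhds η, Integrable (fun z => Real.exp (t * z)) ν)
    (hderiv : deriv Λ η = q)
    (νt : Measure ℝ)
    (hνt : νt = ν.withDensity fun z => ENNReal.ofReal (Real.exp (z * η - Λ η)))
    (m3 : ℝ) (hm3 : m3 = ∫ z, |z - deriv Λ η| ^ 3 ∂νt)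
    (Λstar : ℝ) (hΛstar : Λstar = sSup (Set.range fun t => t * q - Λ t)) :
    (((Measure.pi fun _ : Fin N => ν).map
        (fun z : Fin N → ℝ => (∑ i, z i) / N)) (Set.Ici q)).toReal ≤
      Real.exp (-(N : ℝ) * Λstar) * (1 / Real.sqrt N) *
        (m3 / deriv (deriv Λ) η ^ ((3 : ℝ) / 2) +
          1 / (η * Real.sqrt (2 * π * deriv (deriv Λ) η))) := by
  have hcgf : Λ = cgf id ν := hΛ
  have hmem : η ∈ interior (integrableExpSet id ν) := mem_interior_iff_mem_nhds.2 hfin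
  have hi : Integrable (fun z => exp (η * id z)) ν :=
    interior_subset (s := integrableExpSet id ν) hmem
  have htilt : νt = ν.tilted (η * id ·) := by
    rw [hνt, Measure.tilted, hcgf]
    congr 1 with z
    rw [exp_sub, exp_cgf hi, mul_comm z]
    rfl
  have hprob : IsProbabilityMeasure νt := htilt ▸ isProbabilityMeasure_tilted hi
  have hmean : ∫ z, z ∂νt = q := by
    rw [htilt, ← hderiv, hcgf]
    exact integral_tilted_mul_self hmem
  have hvar : variance id νt = deriv (deriv Λ) η := by
    rw [htilt, variance_tilted_mul hmem, hcgf, iteratedDeriv_succ, iteratedDeriv_one]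
  have hvpos : 0 < variance id νt := htilt ▸ variance_tilted_mul_pos hmem hVar
  have h3 : MemLp id 3 νt := htilt ▸ memLp_tilted_mul hmem 3
  have hmain := setIntegral_exp_neg_sum_sub_le h3 hmean hvpos hN hη
  have hN0 : (0 : ℝ) < N := by exact_mod_cast hN
  have hset : (fun z : Fin N → ℝ => (∑ i, z i) / N) ⁻¹' Set.Ici q =
      {z : Fin N → ℝ | 0 ≤ ∑ i, (z i - q)} := by
    ext z
    simp only [Set.mem_preimage, Set.mem_Ici, Set.mem_ofPred_eq, Finset.sum_sub_distrib,
      Finset.sum_const, Finset.card_univ, Fintype.card_fin, nsmul_eq_mul]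
    rw [le_div_iff₀ hN0, sub_nonneg, mul_comm]
  have hexp (z : Fin N → ℝ) : exp (-∑ i, η * id (z i)) =
      exp (-(N * (η * q))) * exp (-(η * ∑ i, (z i - q))) := by
    rw [← exp_add]
    simp only [Finset.sum_sub_distrib, ← Finset.mul_sum, id_eq, Finset.sum_const,
      Finset.card_univ, Fintype.card_fin, nsmul_eq_mul]
    ring_nf
  have hmgf : ∫ z, exp (η * id z) ∂ν = exp (Λ η) := by
    rw [hcgf, exp_cgf hi]
    rfl
  rw [Measure.map_apply (by fun_prop) measurableSet_Ici, hset, ← Measure.real,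
    pi_real_eq_integral_tilted ν hi, ← htilt, hmgf]
  simp only [hexp, Fintype.card_fin]
  rw [integral_const_mul, ← mul_assoc, ← exp_nat_mul, ← exp_add]
  have hstar : Λstar ≤ η * q - Λ η := by
    rw [hΛstar, hcgf]
    exact sSup_mul_sub_cgf_le hmem (hcgf ▸ hderiv)
  rw [hm3, hderiv, ← hvar, mul_assoc (exp (-(N : ℝ) * Λstar))]
  refine mul_le_mul (exp_le_exp.2 ?_) hmain (integral_nonneg fun z => (exp_pos _).le)
    (exp_pos _).le
  nlinarith
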